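/- Let κ be a partition with at most n parts. Assume the non-symmetric Macdonald polynomial E_ν exists for every composition ν∈ℕ^n with ν^+=κ and that the symmetric Macdonald polynomial P_κ exists. Then P_κ = Σ_{ν : ν^+=κ} (d'_κ(q,t)/d'_ν(q,t))·E_ν. -/

import Mathlib

/- STATEMENT 7: P_κ = Σ_{ν : ν⁺=κ} (d'_κ(q,t)/d'_ν(q,t))·E_ν. -/

open Finset MvPolynomial

namespace Stmt7

/-- leg colength l'_η(i) -/
def legCo (n : ℕ) (η : Fin n → ℕ) (i : Fin n) : ℕ :=
  (univ.filter fun k => k < i ∧ η i ≤ η k).card +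
  (univ.filter fun k => i < k ∧ η i < η k).card

/-- leg length l(s) of the node s = (i,j) -/
def leg (n : ℕ) (η : Fin n → ℕ) (i : Fin n) (j : ℕ) : ℕ :=
  (univ.filter fun k => i < k ∧ j ≤ η k ∧ η k ≤ η i).card +
  (univ.filter fun k => k < i ∧ j ≤ η k + 1 ∧ η k + 1 ≤ η i).card

/-- The field K = ℚ(q,t). -/
abbrev K : Type := FractionRing (MvPolynomial (Fin 2) ℚ)

noncomputable def q : K := algebraMap (MvPolynomial (Fin 2) ℚ) K (X 0)
noncomputable def t : K := algebraMap (MvPolynomial (Fin 2) ℚ) K (X 1)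

/-- The polynomial ring K[x_1,…,x_n]. -/
abbrev P (n : ℕ) : Type := MvPolynomial (Fin n) K

/-- the automorphism s_k exchanging x_k and x_{k+1} (0-indexed; identity out of range) -/
noncomputable def sOp (n : ℕ) (k : ℕ) : P n →ₗ[K] P n :=
  if h : k + 1 < n then
    (rename (Equiv.swap (⟨k, Nat.lt_of_succ_lt h⟩ : Fin n) ⟨k + 1, h⟩)).toLinearMap
  else LinearMap.id

/-- τ_1 : x_1 ↦ qv·x_1 (the first variable is 0-indexed) -/
noncomputable def tauOp (n : ℕ) (qv : K) : P n →ₗ[K] P n :=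
  (aeval (fun j : Fin n => if (j : ℕ) = 0 then C qv * X j else X j)).toLinearMap

/-- ω := s_{n−1}⋯s_2 s_1 τ_1 -/
noncomputable def omegaOp (n : ℕ) (qv : K) : P n →ₗ[K] P n :=
  (List.range (n - 1)).foldl (fun acc k => sOp n k ∘ₗ acc) (tauOp n qv)

/-- The defining property of the Demazure–Lustig operators T_k (0-indexed), for the
parameter value tv: (x_k − x_{k+1})·(T_k f) = (x_k − x_{k+1})·tv·f
+ (tv·x_k − x_{k+1})·(s_k f − f), i.e. T_k f is the polynomial quotient from the usual
definition. -/
def IsDL (n : ℕ) (tv : K) (T : ℕ → P n →ₗ[K] P n) : Prop :=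
  ∀ k, ∀ hk : k + 1 < n, ∀ f : P n,
    (X (⟨k, Nat.lt_of_succ_lt hk⟩ : Fin n) - X ⟨k + 1, hk⟩) * T k f =
      (X (⟨k, Nat.lt_of_succ_lt hk⟩ : Fin n) - X ⟨k + 1, hk⟩) * (C tv * f) +
      (C tv * X (⟨k, Nat.lt_of_succ_lt hk⟩ : Fin n) - X ⟨k + 1, hk⟩) * (sOp n k f - f)

/-- T_k⁻¹ = tv⁻¹ − 1 + tv⁻¹ T_k -/
noncomputable def Tinv (n : ℕ) (tv : K) (T : ℕ → P n →ₗ[K] P n) (k : ℕ) : P n →ₗ[K] P n :=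
  tv⁻¹ • LinearMap.id - LinearMap.id + tv⁻¹ • T k

/-- The Cherednik operator Y_i (0-indexed i):
Y_i = tv^{i+1−n}·T_i⋯T_{n−2}·ω·T_0⁻¹⋯T_{i−1}⁻¹. -/
noncomputable def Yop (n : ℕ) (qv tv : K) (T : ℕ → P n →ₗ[K] P n) (i : Fin n) :
    P n →ₗ[K] P n :=
  (tv ^ (n - 1 - (i : ℕ)))⁻¹ •
    (((List.range' (i : ℕ) (n - 1 - (i : ℕ))).foldr (fun k acc => T k ∘ₗ acc) LinearMap.id) ∘ₗ
      omegaOp n qv ∘ₗ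
      ((List.range (i : ℕ)).foldr (fun k acc => Tinv n tv T k ∘ₗ acc) LinearMap.id))

/-- the decreasing rearrangement η⁺ of η -/
noncomputable def sortDesc (n : ℕ) (η : Fin n → ℕ) : Fin n → ℕ :=
  fun i => η (Tuple.sort η i.rev)

/-- dominance order on n-tuples (of equal sum) -/
def domLE (n : ℕ) (ν μ : Fin n → ℕ) : Prop :=
  (∑ i, ν i = ∑ i, μ i) ∧
  ∀ p : Fin n, ∑ i ∈ univ.filter (· ≤ p), ν i ≤ ∑ i ∈ univ.filter (· ≤ p), μ i

def domLT (n : ℕ) (ν μ : Fin n → ℕ) : Prop := domLE n ν μ ∧ ν ≠ μ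

/-- the order ≺ : ν ≺ η iff ν⁺ < η⁺, or ν⁺ = η⁺ and ν < η (dominance order) -/
noncomputable def prec (n : ℕ) (ν η : Fin n → ℕ) : Prop :=
  domLT n (sortDesc n ν) (sortDesc n η) ∨ (sortDesc n ν = sortDesc n η ∧ domLT n ν η)

/-- E is the non-symmetric Macdonald polynomial for the composition η (with parameters
qv, tv and Demazure–Lustig operators T): it has the triangular form
E = x^η + Σ_{ν≺η} b_{ην} x^ν and satisfies Y_i E = qv^{η_i}·tv^{−l'_η(i)}·E for all i. -/
noncomputable def IsNSMac (n : ℕ) (qv tv : K) (T : ℕ → P n →ₗ[K] P n)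
    (η : Fin n → ℕ) (E : P n) : Prop :=
  coeff (Finsupp.equivFunOnFinite.symm η) E = 1 ∧
  (∀ ν : Fin n →₀ ℕ, coeff ν E ≠ 0 → (ν : Fin n → ℕ) = η ∨ prec n (ν : Fin n → ℕ) η) ∧
  ∀ i : Fin n, Yop n qv tv T i E = (qv ^ η i / tv ^ legCo n η i) • E

/-- Pp is the symmetric Macdonald polynomial for the partition κ (with parameters qv, tv
and Demazure–Lustig operators T): it is symmetric, of the triangular form
m_κ + Σ_{μ<κ} u_{κμ} m_μ, and satisfies (Σ_i Y_i) Pp = (Σ_i qv^{κ_i}·tv^{1−i}) Pp. -/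
noncomputable def IsSymMac (n : ℕ) (qv tv : K) (T : ℕ → P n →ₗ[K] P n)
    (κ : Fin n → ℕ) (Pp : P n) : Prop :=
  Pp.IsSymmetric ∧
  coeff (Finsupp.equivFunOnFinite.symm κ) Pp = 1 ∧
  (∀ ν : Fin n →₀ ℕ, coeff ν Pp ≠ 0 →
    sortDesc n (ν : Fin n → ℕ) = κ ∨ domLT n (sortDesc n (ν : Fin n → ℕ)) κ) ∧
  (∑ i : Fin n, Yop n qv tv T i) Pp = (∑ i : Fin n, qv ^ κ i * (tv ^ (i : ℕ))⁻¹) • Pp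

/-- d'_η(q,t) = ∏_s (1 − q^{a(s)+1} t^{l(s)}) -/
noncomputable def dP' (n : ℕ) (η : Fin n → ℕ) : K :=
  ∏ i : Fin n, ∏ j ∈ Finset.Icc 1 (η i), (1 - q ^ (η i - j + 1) * t ^ (leg n η i j))

end Stmt7

open Stmt7

open Finset MvPolynomial
open Stmt7
namespace S7Aux

/-- Demazure-Lustig property for a pair of variables. -/
def DL {n : ℕ} (i j : Fin n) (T : P n →ₗ[K] P n) : Prop :=
  ∀ f : P n, (X i - X j) * T f =
    (1 - C t) * X j * f + (C t * X i - X j) * rename (Equiv.swap i j) f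

lemma X_sub_ne {n : ℕ} {i j : Fin n} (h : i ≠ j) : (X i - X j : P n) ≠ 0 := by
  intro h0
  exact h (X_injective (sub_eq_zero.mp h0))

lemma rename_swap_swap {n : ℕ} (i j : Fin n) (f : P n) :
    rename (Equiv.swap i j) (rename (Equiv.swap i j) f) = f := by
  rw [rename_rename]
  have : (⇑(Equiv.swap i j) ∘ ⇑(Equiv.swap i j)) = id := by
    funext x; simp
  rw [this, rename_id_apply]

lemma DL.sw {n : ℕ} {i j : Fin n} {T : P n →ₗ[K] P n} (h : DL i j T) (f : P n) (σ : Fin n → Fin n) :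
    (X (σ i) - X (σ j)) * rename σ (T f) =
    (1 - C t) * X (σ j) * rename σ f + (C t * X (σ i) - X (σ j)) *
      rename σ (rename (Equiv.swap i j) f) := by
  have := congrArg (rename σ) (h f)
  simpa only [map_mul, map_sub, map_add, rename_X, rename_C, map_one] using this

lemma DL.quad {n : ℕ} {i j : Fin n} (hij : i ≠ j) {T : P n →ₗ[K] P n} (h : DL i j T) (f : P n) :
    T (T f) = (C t - 1) * T f + C t * f := by
  have h1 := h f
  have h2 := h.sw f (Equiv.swap i j)
  have h3 := h (T f)
  rw [rename_swap_swap, Equiv.swap_apply_left, Equiv.swap_apply_right] at h2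
  have hx := X_sub_ne hij
  apply mul_left_cancel₀ (mul_ne_zero hx hx)
  linear_combination (X i - X j) * h3 + ((1 - C t) * X j - (C t - 1) * (X i - X j)) * h1
    - (C t * X i - X j) * h2

lemma DL.comm {n : ℕ} {i j k l : Fin n} (hij : i ≠ j) (hkl : k ≠ l) (hik : i ≠ k) (hil : i ≠ l)
    (hjk : j ≠ k) (hjl : j ≠ l)
    {T U : P n →ₗ[K] P n} (h : DL i j T) (h' : DL k l U) (f : P n) :
    T (U f) = U (T f) := by
  have a1 := h f
  have a2 := h' f
  have a3 := h (U f)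
  have a4 := h' (T f)
  have a5 := h.sw f (Equiv.swap k l)
  have a6 := h'.sw f (Equiv.swap i j)
  rw [Equiv.swap_apply_of_ne_of_ne hik hil, Equiv.swap_apply_of_ne_of_ne hjk hjl] at a5
  rw [Equiv.swap_apply_of_ne_of_ne hik.symm hjk.symm, Equiv.swap_apply_of_ne_of_ne hil.symm hjl.symm] at a6
  have hc : rename (Equiv.swap i j) (rename (Equiv.swap k l) f) =
      rename (Equiv.swap k l) (rename (Equiv.swap i j) f) := by
    rw [rename_rename, rename_rename]
    congr 1
    congr 1
    funext x
    have : Equiv.swap i j * Equiv.swap k l = Equiv.swap k l * Equiv.swap i j := by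
      apply Equiv.Perm.Disjoint.commute
      intro x
      by_cases hx : x = i ∨ x = j
      · right
        rcases hx with rfl | rfl
        · exact Equiv.swap_apply_of_ne_of_ne hik hil
        · exact Equiv.swap_apply_of_ne_of_ne hjk hjl
      · left
        push Not at hx
        exact Equiv.swap_apply_of_ne_of_ne hx.1 hx.2
    exact congrArg (fun e : Equiv.Perm (Fin n) => e x) this
  rw [hc] at a6
  have hx := X_sub_ne hij
  have hy := X_sub_ne hkl
  apply mul_left_cancel₀ (mul_ne_zero hx hy)
  linear_combination (X k - X l) * a3 - (X i - X j) * a4 + (1 - C t) * X j * a2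
    + (C t * X i - X j) * a6 - (1 - C t) * X l * a1 - (C t * X k - X l) * a5

lemma DL.braid {n : ℕ} {i j k : Fin n} (hij : i ≠ j) (hjk : j ≠ k) (hik : i ≠ k)
    {T U : P n →ₗ[K] P n} (h : DL i j T) (h' : DL j k U) (f : P n) :
    T (U (T f)) = U (T (U f)) := by
  have e1 := h f
  have e2 := h.sw f (Equiv.swap i j)
  have e3 := h.sw f (Equiv.swap j k)
  have e4 := h.sw f (Equiv.swap i j ∘ Equiv.swap j k)
  have e5 := h' (T f)
  have e6 := h'.sw (T f) (Equiv.swap i j)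
  have e7 := h (U (T f))
  have g1 := h' f
  have g2 := h'.sw f (Equiv.swap j k)
  have g3 := h'.sw f (Equiv.swap i j)
  have g4 := h'.sw f (Equiv.swap j k ∘ Equiv.swap i j)
  have g5 := h (U f)
  have g6 := h.sw (U f) (Equiv.swap j k)
  have g7 := h' (T (U f))
  have hc : rename (Equiv.swap i j) (rename (Equiv.swap j k) (rename (Equiv.swap i j) f)) =
      rename (Equiv.swap j k) (rename (Equiv.swap i j) (rename (Equiv.swap j k) f)) := by
    simp only [rename_rename]
    congr 1
    congr 1
    funext x
    simp only [Function.comp, Equiv.swap_apply_def]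
    grind
  have s1 : Equiv.swap i j k = k := Equiv.swap_apply_of_ne_of_ne hik.symm hjk.symm
  have s2 : Equiv.swap j k i = i := Equiv.swap_apply_of_ne_of_ne hij hik
  simp only [← rename_rename, Function.comp, Equiv.swap_apply_left, Equiv.swap_apply_right, s1, s2,
    rename_swap_swap] at e2 e3 e4 e6 g2 g3 g4 g6
  rw [hc] at e4
  have hx := X_sub_ne hij
  have hy := X_sub_ne hjk
  have hz := X_sub_ne hik
  set x : P n := X i
  set y : P n := X j
  set z : P n := X k
  apply mul_left_cancel₀ (mul_ne_zero (mul_ne_zero (mul_ne_zero hx hx) (mul_ne_zero hy hy)) hz)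
  linear_combination (x - y) * (y - z) ^ 2 * (x - z) * e7
    + (x - y) * (y - z) * (x - z) * (1 - C t) * y * e5
    + (x - y) * (y - z) ^ 2 * (C t * x - y) * e6
    + (y - z) * (x - z) * (1 - C t) ^ 2 * y * z * e1
    + (x - y) * (y - z) * (1 - C t) * y * (C t * y - z) * e3
    - (y - z) ^ 2 * (C t * x - y) * (1 - C t) * z * e2
    + (x - y) * (y - z) * (C t * x - y) * (C t * x - z) * e4
    - (x - y) ^ 2 * (y - z) * (x - z) * g7
    - (x - y) * (y - z) * (x - z) * (1 - C t) * z * g5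
    - (x - y) ^ 2 * (y - z) * (C t * y - z) * g6
    - (x - y) * (x - z) * (1 - C t) ^ 2 * y * z * g1
    - (x - y) * (y - z) * (1 - C t) * z * (C t * x - y) * g3
    + (x - y) ^ 2 * (C t * y - z) * (1 - C t) * z * g2
    - (x - y) * (y - z) * (C t * y - z) * (C t * x - z) * g4

lemma sOp_eq {n k : ℕ} (hk : k + 1 < n) (f : P n) : sOp n k f =
    rename (Equiv.swap (⟨k, Nat.lt_of_succ_lt hk⟩ : Fin n) ⟨k + 1, hk⟩) f := by
  simp [sOp, hk]

lemma DL_of_isDL {n : ℕ} {T : ℕ → P n →ₗ[K] P n} (hT : IsDL n t T) {k : ℕ} (hk : k + 1 < n) :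
    DL (⟨k, Nat.lt_of_succ_lt hk⟩ : Fin n) ⟨k + 1, hk⟩ (T k) := by
  intro f
  have := hT k hk f
  rw [sOp_eq hk] at this
  linear_combination this

/-- The algebra homomorphism underlying `omegaOp`. -/
lemma omega_alg (n : ℕ) (hn : 0 < n) (m : ℕ) (hm : m < n) : ∃ W : P n →ₐ[K] P n,
    (List.range m).foldl (fun acc k => sOp n k ∘ₗ acc) (tauOp n q) = W.toLinearMap ∧
    W (X ⟨0, hn⟩) = C q * X ⟨m, hm⟩ ∧
    (∀ j (hj : j + 1 < n), j < m → W (X ⟨j + 1, hj⟩) = X ⟨j, Nat.lt_of_succ_lt hj⟩) ∧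
    (∀ j (hj : j < n), m < j → W (X ⟨j, hj⟩) = X ⟨j, hj⟩) := by
  induction m with
  | zero =>
    refine ⟨_, rfl, ?_, ?_, ?_⟩
    · simp
    · intro j hj h; omega
    · intro j hj h; simp; omega
  | succ m ih =>
    obtain ⟨W, h1, h2, h3, h4⟩ := ih (by omega)
    refine ⟨(rename (Equiv.swap (⟨m, Nat.lt_of_succ_lt hm⟩ : Fin n) ⟨m + 1, hm⟩)).comp W,
      ?_, ?_, ?_, ?_⟩
    · rw [List.range_succ, List.foldl_append, h1]
      refine LinearMap.ext fun f => ?_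
      simp [sOp_eq hm]
    · simp [h2]
    · intro j hj h
      rcases Nat.lt_succ_iff_lt_or_eq.mp h with h | rfl
      · simp only [AlgHom.comp_apply, h3 j hj h, rename_X]
        rw [Equiv.swap_apply_of_ne_of_ne] <;> simp [Fin.ext_iff] <;> omega
      · simp only [AlgHom.comp_apply, h4 (j+1) hj (by omega), rename_X]
        simp
    · intro j hj h
      simp only [AlgHom.comp_apply, h4 j hj (by omega), rename_X]
      rw [Equiv.swap_apply_of_ne_of_ne] <;> simp [Fin.ext_iff] <;> omega

lemma T_omega {n : ℕ} {T : ℕ → P n →ₗ[K] P n} (hT : IsDL n t T) {k : ℕ} (hk : k + 2 < n) (f : P n) :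
    T k (omegaOp n q f) = omegaOp n q (T (k + 1) f) := by
  obtain ⟨W, h1, h2, h3, h4⟩ := omega_alg n (by omega) (n - 1) (by omega)
  have hW : omegaOp n q = W.toLinearMap := h1
  rw [hW]
  simp only [AlgHom.toLinearMap_apply]
  have hk1 : k + 1 < n := by omega
  have a1 := DL_of_isDL hT hk1 (W f)
  have a2 := congrArg W (DL_of_isDL hT (k := k + 1) hk f)
  have w1 := h3 k hk1 (by omega)
  have w2 := h3 (k + 1) hk (by omega)
  have key : W (rename (Equiv.swap (⟨k + 1, hk1⟩ : Fin n) ⟨k + 1 + 1, hk⟩) f) =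
      rename (Equiv.swap (⟨k, Nat.lt_of_succ_lt hk1⟩ : Fin n) ⟨k + 1, hk1⟩) (W f) := by
    have : W.comp (rename (Equiv.swap (⟨k + 1, hk1⟩ : Fin n) ⟨k + 1 + 1, hk⟩)) =
      (rename (Equiv.swap (⟨k, Nat.lt_of_succ_lt hk1⟩ : Fin n) ⟨k + 1, hk1⟩)).comp W := by
      apply MvPolynomial.algHom_ext
      intro l
      simp only [AlgHom.comp_apply, rename_X]
      by_cases c1 : l = ⟨k + 1, hk1⟩
      · subst c1; simp [w1, w2]
      by_cases c2 : l = ⟨k + 1 + 1, hk⟩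
      · subst c2; simp [w1, w2]
      rw [Equiv.swap_apply_of_ne_of_ne c1 c2]
      obtain ⟨l, hl⟩ := l
      simp [Fin.ext_iff] at c1 c2
      rcases l with _ | l
      · rw [h2]
        simp only [map_mul, rename_X, algHom_C]
        rw [Equiv.swap_apply_of_ne_of_ne] <;> simp [Fin.ext_iff] <;> omega
      · rw [h3 l hl (by omega), rename_X]
        rw [Equiv.swap_apply_of_ne_of_ne] <;> simp [Fin.ext_iff] <;> omega
    exact congrArg (fun e => e f) this
  have hc : ∀ r : K, W (C r) = C r := fun r => W.commutes r
  simp only [map_mul, map_sub, map_add, map_one, hc, w1, w2, key] at a2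
  apply mul_left_cancel₀ (X_sub_ne (n := n) (i := ⟨k, Nat.lt_of_succ_lt hk1⟩) (j := ⟨k + 1, hk1⟩)
    (by simp))
  rw [a1, a2]

end S7Aux

open Finset MvPolynomial
open Stmt7
namespace S7Aux

section Hecke
variable {A : Type*} [Ring A] [Algebra K A]

lemma t_ne : t ≠ 0 := by
  unfold t
  intro h
  rw [map_eq_zero_iff _ (IsFractionRing.injective _ _)] at h
  exact X_ne_zero _ h

/-- abstract inverse -/
noncomputable def TI (T : ℕ → A) (k : ℕ) : A := t⁻¹ • (1 : A) - 1 + t⁻¹ • T k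

noncomputable def AA (N : ℕ) (T : ℕ → A) (i : ℕ) : A := ((List.range' i (N - i)).map T).prod
noncomputable def BB (T : ℕ → A) (i : ℕ) : A := ((List.range i).map (TI T)).prod
noncomputable def YY (N : ℕ) (T : ℕ → A) (w : A) (i : ℕ) : A :=
  (t ^ (N - i))⁻¹ • (AA N T i * w * BB T i)

/-- the relations -/
structure Hecke (N : ℕ) (T : ℕ → A) (w : A) : Prop where
  hq : ∀ k, k < N → T k * T k = (t - 1) • T k + t • (1 : A)
  hb : ∀ k, k + 1 < N → T k * T (k + 1) * T k = T (k + 1) * T k * T (k + 1)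
  hc : ∀ i j, i < N → j < N → i + 1 < j → Commute (T i) (T j)
  hw : ∀ k, k + 1 < N → T k * w = w * T (k + 1)

variable {N : ℕ} {T : ℕ → A} {w : A}

lemma Hecke.T_TI (H : Hecke N T w) {k : ℕ} (hk : k < N) : T k * TI T k = 1 := by
  have h := t_ne
  unfold TI
  rw [mul_add, mul_sub, mul_smul_comm, mul_smul_comm, H.hq k hk, mul_one, smul_add, smul_smul,
    smul_smul, inv_mul_cancel₀ h, one_smul, mul_sub, inv_mul_cancel₀ h, sub_smul, mul_one, one_smul]
  abel

lemma Hecke.TI_T (H : Hecke N T w) {k : ℕ} (hk : k < N) : TI T k * T k = 1 := by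
  have h := t_ne
  unfold TI
  rw [add_mul, sub_mul, smul_mul_assoc, smul_mul_assoc, H.hq k hk, one_mul, smul_add, smul_smul,
    smul_smul, inv_mul_cancel₀ h, one_smul, mul_sub, inv_mul_cancel₀ h, sub_smul, mul_one, one_smul]
  abel

lemma AA_succ {i : ℕ} (hi : i < N) : AA N T i = T i * AA N T (i + 1) := by
  unfold AA
  rw [show N - i = (N - (i + 1)) + 1 by omega, List.range'_succ]
  simp

lemma BB_succ (i : ℕ) : BB T (i + 1) = BB T i * TI T i := by
  unfold BB
  rw [List.range_succ]
  simp

lemma Hecke.TYT (H : Hecke N T w) {i : ℕ} (hi : i < N) :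
    T i * YY N T w (i + 1) * T i = t • YY N T w i := by
  unfold YY
  rw [BB_succ, AA_succ hi, mul_smul_comm, smul_mul_assoc, smul_smul]
  have h := t_ne
  have e : t * (t ^ (N - i))⁻¹ = (t ^ (N - (i + 1)))⁻¹ := by
    rw [show N - i = (N - (i + 1)) + 1 by omega, pow_succ]
    field_simp
  rw [e]
  congr 1
  simp only [mul_assoc]
  rw [H.TI_T hi, mul_one]

lemma Hecke.T_AA_far (H : Hecke N T w) {i j : ℕ} (hi : i < N) (hj : i + 1 < j) :
    Commute (T i) (AA N T j) := by
  unfold AA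
  apply Commute.list_prod_right
  intro x hx
  rw [List.mem_map] at hx
  obtain ⟨m, hm, rfl⟩ := hx
  rw [List.mem_range'_1] at hm
  exact H.hc i m hi (by omega) (by omega)

lemma Hecke.T_AA (H : Hecke N T w) {i : ℕ} (hi : i + 1 < N) (d : ℕ) : ∀ j, j + d = i →
    T (i + 1) * AA N T j = AA N T j * T i := by
  induction d with
  | zero =>
    intro j hj
    obtain rfl : j = i := by omega
    rw [AA_succ (by omega), AA_succ hi]
    have e := (H.T_AA_far (i := j) (j := j + 1 + 1) (by omega) (by omega)).eq
    calc T (j + 1) * (T j * (T (j + 1) * AA N T (j + 1 + 1)))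
        = (T (j + 1) * T j * T (j + 1)) * AA N T (j + 1 + 1) := by simp only [mul_assoc]
      _ = T j * T (j + 1) * (T j * AA N T (j + 1 + 1)) := by rw [← H.hb j hi]; simp only [mul_assoc]
      _ = _ := by rw [e]; simp only [mul_assoc]
  | succ d ih =>
    intro j hj
    rw [AA_succ (by omega), ← mul_assoc, ← (H.hc j (i + 1) (by omega) hi (by omega)).eq, mul_assoc,
      ih (j + 1) (by omega), mul_assoc]

lemma Hecke.YY_zero_comm (H : Hecke N T w) {i : ℕ} (hi : i + 1 < N) :
    Commute (T (i + 1)) (YY N T w 0) := by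
  unfold YY
  apply Commute.smul_right
  simp only [BB, List.range_zero, List.map_nil, List.prod_nil, mul_one]
  show _ * _ = _ * _
  rw [← mul_assoc, H.T_AA hi i 0 (by omega), mul_assoc, H.hw i hi, mul_assoc]

lemma Hecke.YY_succ (H : Hecke N T w) {i : ℕ} (hi : i < N) :
    YY N T w (i + 1) = t • (TI T i * YY N T w i * TI T i) := by
  have := H.TYT hi
  calc YY N T w (i + 1) = (TI T i * T i) * YY N T w (i + 1) * (T i * TI T i) := by
        rw [H.TI_T hi, H.T_TI hi, one_mul, mul_one]
    _ = TI T i * (T i * YY N T w (i + 1) * T i) * TI T i := by simp only [mul_assoc]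
    _ = _ := by rw [this, mul_smul_comm, smul_mul_assoc]

lemma comm_TI {x : A} {k : ℕ} (h : Commute x (T k)) : Commute x (TI T k) := by
  unfold TI
  exact (((Commute.one_right x).smul_right _).sub_right (Commute.one_right x)).add_right
    (h.smul_right _)

/-- braid relation with inverses -/
lemma Hecke.braid_inv (H : Hecke N T w) {k : ℕ} (hk : k + 1 < N) :
    T k * (TI T (k + 1) * TI T k) = TI T (k + 1) * TI T k * T (k + 1) ∧
    (TI T k * TI T (k + 1)) * T k = T (k + 1) * (TI T k * TI T (k + 1)) := by
  have a1 := H.T_TI (k := k) (by omega)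
  have a2 := H.TI_T (k := k) (by omega)
  have b1 := H.T_TI hk
  have b2 := H.TI_T hk
  have hb := H.hb k hk
  generalize TI T k = u at *
  generalize TI T (k + 1) = v at *
  generalize T k = x at *
  generalize T (k + 1) = y at *
  constructor
  · calc x * (v * u) = (v * (u * x) * y) * x * (v * u) := by rw [a2, mul_one, b2, one_mul]
      _ = v * u * (x * y * x) * (v * u) := by simp only [mul_assoc]
      _ = v * u * y * x * (y * v) * u := by rw [hb]; simp only [mul_assoc]
      _ = v * u * y * (x * u) := by rw [b1]; simp only [mul_assoc, one_mul]
      _ = _ := by rw [a1, mul_one]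
  · calc u * v * x = u * v * x * (y * (x * u) * v) := by rw [a1, mul_one, b1, mul_one]
      _ = u * v * (x * y * x) * (u * v) := by simp only [mul_assoc]
      _ = u * (v * y) * x * y * (u * v) := by rw [hb]; simp only [mul_assoc]
      _ = (u * x) * y * (u * v) := by rw [b2]; simp only [mul_assoc, one_mul]
      _ = _ := by rw [a2, one_mul]

lemma Hecke.YY_comm_aux (H : Hecke N T w) (j : ℕ) : j ≤ N → 
    (∀ i, i < N → i ≠ j → i + 1 ≠ j → Commute (T i) (YY N T w j)) ∧
    (∀ i, i < N → i ≠ j + 1 → i ≠ j → j + 1 ≤ N → Commute (T i) (YY N T w (j + 1))) := by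
  induction j with
  | zero =>
    intro _
    have h0 : ∀ i, i < N → i ≠ 0 → Commute (T i) (YY N T w 0) := by
      intro i hi h
      obtain ⟨i, rfl⟩ := Nat.exists_eq_succ_of_ne_zero h
      exact H.YY_zero_comm hi
    refine ⟨fun i hi h _ => h0 i hi h, ?_⟩
    intro i hi h1 h2 h3
    rw [H.YY_succ (by omega)]
    have c : Commute (T i) (TI T 0) := comm_TI (H.hc 0 i (by omega) hi (by omega)).symm
    exact ((c.mul_right (h0 i hi (by omega))).mul_right c).smul_right _
  | succ j ih =>
    intro hj
    obtain ⟨ih1, ih2⟩ := ih (by omega)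
    refine ⟨fun i hi h1 h2 => ih2 i hi (by omega) (by omega) hj, ?_⟩
    intro i hi h1 h2 h3
    by_cases hij : i = j
    · subst hij
      rw [H.YY_succ (by omega), H.YY_succ (i := i) (by omega)]
      obtain ⟨b1, b2⟩ := H.braid_inv (k := i) (by omega)
      have c := ih1 (i + 1) (by omega) (by omega) (by omega)
      simp only [mul_smul_comm, smul_mul_assoc]
      apply Commute.smul_right
      apply Commute.smul_right
      show _ * _ = _ * _
      calc T i * (TI T (i + 1) * (TI T i * YY N T w i * TI T i) * TI T (i + 1))
          = (T i * (TI T (i + 1) * TI T i)) * YY N T w i * (TI T i * TI T (i + 1)) := by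
            simp only [mul_assoc]
        _ = TI T (i + 1) * TI T i * (T (i + 1) * YY N T w i) * (TI T i * TI T (i + 1)) := by
            rw [b1]; simp only [mul_assoc]
        _ = TI T (i + 1) * TI T i * YY N T w i * (T (i + 1) * (TI T i * TI T (i + 1))) := by
            rw [c.eq]; simp only [mul_assoc]
        _ = _ := by rw [← b2]; simp only [mul_assoc]
    · rw [H.YY_succ (by omega)]
      have c : Commute (T i) (TI T (j + 1)) := by
        apply comm_TI
        rcases lt_or_ge i j with h | h
        · exact H.hc i (j + 1) hi (by omega) (by omega)
        · exact (H.hc (j + 1) i (by omega) hi (by omega)).symm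
      have d := ih2 i hi h2 hij (by omega)
      exact ((c.mul_right d).mul_right c).smul_right _

lemma Hecke.YY_comm (H : Hecke N T w) {i j : ℕ} (hj : j ≤ N) (hi : i < N) (h1 : j ≠ i)
    (h2 : j ≠ i + 1) : Commute (T i) (YY N T w j) :=
  (H.YY_comm_aux j hj).1 i hi h1.symm h2.symm

lemma Hecke.YT (H : Hecke N T w) {i : ℕ} (hi : i < N) :
    YY N T w i * T i = T i * YY N T w (i + 1) + (t - 1) • YY N T w i ∧
    YY N T w (i + 1) * T i = T i * YY N T w i - (t - 1) • YY N T w i := by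
  have h := H.TYT hi
  have a := H.T_TI hi
  have b := H.TI_T hi
  have ht := t_ne
  have e : t • TI T i = T i - (t - 1) • (1 : A) := by
    unfold TI
    rw [smul_add, smul_sub, smul_smul, smul_smul, mul_inv_cancel₀ ht, sub_smul]
    simp only [one_smul]
    abel
  constructor
  · have : T i * YY N T w (i + 1) = YY N T w i * (t • TI T i) := by
      rw [mul_smul_comm, ← smul_mul_assoc, ← h, mul_assoc, a, mul_one]
    rw [this, e, mul_sub, mul_smul_comm, mul_one]
    abel
  · have : YY N T w (i + 1) * T i = (t • TI T i) * YY N T w i := by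
      rw [smul_mul_assoc, ← mul_smul_comm, ← h, mul_assoc, ← mul_assoc (TI T i), b, one_mul]
    rw [this, e, sub_mul, smul_mul_assoc, one_mul]

end Hecke

lemma hecke_of_isDL {n : ℕ} {T : ℕ → P n →ₗ[K] P n} (hT : IsDL n t T) :
    Hecke (A := Module.End K (P n)) (n - 1) T (omegaOp n q) := by
  have cs : ∀ (r : K) (f : P n), r • f = C r * f := fun r f => smul_eq_C_mul f r
  constructor
  · intro k hk
    refine LinearMap.ext fun f => ?_
    have := (DL_of_isDL hT (k := k) (by omega)).quad (by simp) f
    simp only [Module.End.mul_apply, LinearMap.add_apply, LinearMap.smul_apply, Module.End.one_apply,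
      cs, map_sub, map_one]
    exact this
  · intro k hk
    refine LinearMap.ext fun f => ?_
    have h1 : k + 1 < n := by omega
    have h2 : k + 1 + 1 < n := by omega
    exact (DL_of_isDL hT h1).braid (by simp) (by simp) (by simp; omega)
      (DL_of_isDL hT h2) f
  · intro i j hi hj hij
    refine LinearMap.ext fun f => ?_
    have h1 : i + 1 < n := by omega
    have h2 : j + 1 < n := by omega
    exact (DL_of_isDL hT h1).comm (by simp) (by simp) (by simp [Fin.ext_iff]; omega)
      (by simp [Fin.ext_iff]; omega) (by simp [Fin.ext_iff]; omega) (by simp [Fin.ext_iff]; omega)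
      (DL_of_isDL hT h2) f
  · intro k hk
    refine LinearMap.ext fun f => ?_
    exact T_omega hT (by omega) f

lemma foldr_eq_prod {A : Type*} [Monoid A] (l : List ℕ) (g : ℕ → A) :
    l.foldr (fun k acc => g k * acc) 1 = (l.map g).prod := by
  induction l with
  | nil => simp
  | cons a l ih => simp [ih]

lemma Yop_eq {n : ℕ} (T : ℕ → P n →ₗ[K] P n) (i : Fin n) :
    Yop n q t T i = YY (A := Module.End K (P n)) (n - 1) T (omegaOp n q) i := by
  unfold Yop YY AA BB
  rw [← foldr_eq_prod, ← foldr_eq_prod]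
  rfl

end S7Aux

open Finset MvPolynomial
open Stmt7
namespace S7Aux

abbrev A0 : Type := MvPolynomial (Fin 2) ℚ

/-- specialisation t = 1 -/
noncomputable def phi : A0 →ₐ[ℚ] Polynomial ℚ := aeval ![Polynomial.X, 1]

lemma phi_ker (a : A0) (h : phi a = 0) : (X 1 - 1 : A0) ∣ a := by
  let psi : Polynomial ℚ →ₐ[ℚ] A0 := Polynomial.aeval (X 0)
  let I : Ideal A0 := Ideal.span {X 1 - 1}
  have e : (Ideal.Quotient.mkₐ ℚ I).comp (psi.comp phi) = Ideal.Quotient.mkₐ ℚ I := by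
    apply MvPolynomial.algHom_ext
    intro i
    fin_cases i
    · simp [phi, psi]
    · simp [phi, psi]
      symm
      rw [← map_one (Ideal.Quotient.mk I), Ideal.Quotient.eq]
      exact Ideal.subset_span rfl
  have := congrArg (fun f => f a) e
  simp only [AlgHom.comp_apply, h, map_zero] at this
  have h2 : Ideal.Quotient.mk I a = 0 := this.symm
  rw [Ideal.Quotient.eq_zero_iff_mem, Ideal.mem_span_singleton] at h2
  exact h2

noncomputable def io (n : ℕ) : MvPolynomial (Fin n) A0 →+* P n := MvPolynomial.map (algebraMap A0 K)
noncomputable def rho (n : ℕ) : MvPolynomial (Fin n) A0 →+* MvPolynomial (Fin n) (Polynomial ℚ) :=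
  MvPolynomial.map phi.toRingHom

lemma io_inj (n : ℕ) : Function.Injective (io n) :=
  MvPolynomial.map_injective _ (IsFractionRing.injective A0 K)

lemma t_smul_io {n : ℕ} (g : MvPolynomial (Fin n) A0) (m : ℕ) :
    t ^ m • io n g = io n (C (X 1 ^ m) * g) := by
  rw [smul_eq_C_mul, map_mul]
  simp [io, t]

lemma q_smul_io {n : ℕ} (g : MvPolynomial (Fin n) A0) (m : ℕ) :
    q ^ m • io n g = io n (C (X 0 ^ m) * g) := by
  rw [smul_eq_C_mul, map_mul]
  simp [io, q]

lemma rho_t {n : ℕ} (m : ℕ) (g : MvPolynomial (Fin n) A0) : rho n (C (X 1 ^ m) * g) = rho n g := by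
  simp [rho, phi]

lemma rho_coeff {n : ℕ} (h : MvPolynomial (Fin n) A0) (ν : Fin n →₀ ℕ) :
    coeff ν (rho n h) = phi (coeff ν h) := by
  unfold rho
  rw [coeff_map]
  rfl

/-- L reduces to σ modulo t - 1. -/
def Red {n : ℕ} (L : P n →ₗ[K] P n)
    (σ : MvPolynomial (Fin n) (Polynomial ℚ) → MvPolynomial (Fin n) (Polynomial ℚ)) : Prop :=
  ∃ m : ℕ, ∀ g, ∃ h, t ^ m • L (io n g) = io n h ∧ rho n h = σ (rho n g)

lemma Red.comp {n : ℕ} {L M : P n →ₗ[K] P n} {σ τ} (hL : Red L σ) (hM : Red M τ) :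
    Red (L ∘ₗ M) (σ ∘ τ) := by
  obtain ⟨m, hm⟩ := hL
  obtain ⟨m', hm'⟩ := hM
  refine ⟨m + m', fun g => ?_⟩
  obtain ⟨h, h1, h2⟩ := hm' g
  obtain ⟨k, k1, k2⟩ := hm h
  refine ⟨k, ?_, ?_⟩
  · rw [← k1, ← h1, map_smul, pow_add, mul_smul]; rfl
  · rw [k2, h2]; rfl

lemma Red.add {n : ℕ} {L M : P n →ₗ[K] P n} {σ τ} (hL : Red L σ) (hM : Red M τ) :
    Red (L + M) (fun g => σ g + τ g) := by
  obtain ⟨m, hm⟩ := hL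
  obtain ⟨m', hm'⟩ := hM
  refine ⟨m + m', fun g => ?_⟩
  obtain ⟨h, h1, h2⟩ := hm g
  obtain ⟨k, k1, k2⟩ := hm' g
  refine ⟨C (X 1 ^ m') * h + C (X 1 ^ m) * k, ?_, ?_⟩
  · rw [map_add, ← t_smul_io, ← t_smul_io, ← h1, ← k1, LinearMap.add_apply, smul_add, smul_smul,
      smul_smul, ← pow_add, ← pow_add, add_comm m' m]
  · rw [map_add, rho_t, rho_t, h2, k2]

lemma Red.inv_smul {n : ℕ} {L : P n →ₗ[K] P n} {σ} (hL : Red L σ) (m' : ℕ) :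
    Red ((t ^ m')⁻¹ • L) σ := by
  obtain ⟨m, hm⟩ := hL
  refine ⟨m + m', fun g => ?_⟩
  obtain ⟨h, h1, h2⟩ := hm g
  refine ⟨h, ?_, h2⟩
  have := pow_ne_zero m' t_ne
  rw [LinearMap.smul_apply, smul_smul, pow_add, mul_assoc, mul_inv_cancel₀ this, mul_one, h1]

lemma Red.id {n : ℕ} : Red (LinearMap.id : P n →ₗ[K] P n) _root_.id :=
  ⟨0, fun g => ⟨g, by simp, rfl⟩⟩

lemma Red.zero {n : ℕ} : Red (0 : P n →ₗ[K] P n) (fun _ => 0) :=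
  ⟨0, fun g => ⟨0, by simp, by simp⟩⟩

lemma Red.sum {n : ℕ} {ι : Type*} (s : Finset ι) (L : ι → P n →ₗ[K] P n)
    (σ : ι → MvPolynomial (Fin n) (Polynomial ℚ) → MvPolynomial (Fin n) (Polynomial ℚ))
    (h : ∀ i, Red (L i) (σ i)) : Red (∑ i ∈ s, L i) (fun g => ∑ i ∈ s, σ i g) := by
  classical
  induction s using Finset.induction_on with
  | empty => simpa using Red.zero
  | insert a s ha ih =>
    simp only [Finset.sum_insert ha]
    exact (h a).add ih

lemma dvd_swap {n : ℕ} {R : Type*} [CommRing R] (i j : Fin n) (g : MvPolynomial (Fin n) R) :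
    (X i - X j : MvPolynomial (Fin n) R) ∣ rename (Equiv.swap i j) g - g := by
  induction g using MvPolynomial.induction_on with
  | C a => simp
  | add p r hp hr =>
    rw [map_add, add_sub_add_comm]
    exact dvd_add hp hr
  | mul_X p k hp =>
    have h2 : (X i - X j : MvPolynomial (Fin n) R) ∣ X (Equiv.swap i j k) - X k := by
      rw [Equiv.swap_apply_def]
      split_ifs with h1 h2
      · subst h1; exact ⟨-1, by ring⟩
      · subst h2; simp
      · simp
    rw [map_mul, rename_X]
    have : rename (Equiv.swap i j) p * X (Equiv.swap i j k) - p * X k =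
      rename (Equiv.swap i j) p * (X (Equiv.swap i j k) - X k) +
      (rename (Equiv.swap i j) p - p) * X k := by ring
    rw [this]
    exact dvd_add (Dvd.dvd.mul_left h2 _) (Dvd.dvd.mul_right hp _)

lemma DL.red {n : ℕ} {i j : Fin n} (hij : i ≠ j) {T : P n →ₗ[K] P n} (h : DL i j T) :
    Red T (rename (Equiv.swap i j)) := by
  refine ⟨0, fun g => ?_⟩
  obtain ⟨d, hd⟩ := dvd_swap i j g
  refine ⟨rename (Equiv.swap i j) g + (C (X 1) - 1) * (g + X i * d), ?_, ?_⟩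
  · rw [pow_zero, one_smul]
    apply mul_left_cancel₀ (X_sub_ne hij)
    rw [h]
    have hd' := congrArg (io n) hd
    have e : io n (rename (Equiv.swap i j) g) = rename (Equiv.swap i j) (io n g) := by
      simp [io, map_rename]
    have e1 : ∀ i, io n (X i) = X i := fun i => by simp [io]
    have e2 : io n (C (X 1)) = C t := by simp [io, t]
    simp only [map_add, map_mul, map_sub, map_one, e, e1, e2] at hd' ⊢
    linear_combination (C t - 1) * X i * hd'
  · simp [rho, map_rename, phi]

lemma DL.red_inv {n : ℕ} {i j : Fin n} (hij : i ≠ j) {T : ℕ → P n →ₗ[K] P n} {k : ℕ}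
    (h : DL i j (T k)) : Red (Tinv n t T k) (rename (Equiv.swap i j)) := by
  obtain ⟨m, hm⟩ := h.red hij
  refine ⟨m + 1, fun g => ?_⟩
  obtain ⟨d, h1, h2⟩ := hm g
  refine ⟨C (X 1 ^ m) * ((1 - C (X 1)) * g) + d, ?_, ?_⟩
  · rw [map_add, ← h1, ← t_smul_io]
    have e2 : io n (C (X 1)) = C t := by simp [io, t]
    rw [map_mul, map_sub, map_one, e2]
    simp only [Tinv, LinearMap.add_apply, LinearMap.sub_apply, LinearMap.smul_apply,
      LinearMap.id_apply]
    rw [pow_succ, mul_smul, ← smul_add]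
    congr 1
    rw [smul_add, smul_sub, smul_smul, smul_smul, mul_inv_cancel₀ t_ne, one_smul, one_smul,
      smul_eq_C_mul]
    ring
  · rw [map_add, h2, rho_t]
    simp [rho, phi]

/-- τ_i over ℚ[q] -/
noncomputable def tb (n : ℕ) (i : Fin n) :
    MvPolynomial (Fin n) (Polynomial ℚ) →ₐ[Polynomial ℚ] MvPolynomial (Fin n) (Polynomial ℚ) :=
  aeval (fun j => if j = i then C Polynomial.X * X j else X j)

lemma tb_coeff (n : ℕ) (i : Fin n) (g) (η : Fin n →₀ ℕ) :
    coeff η (tb n i g) = Polynomial.X ^ (η i) * coeff η g := by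
  have key : ∀ (ν : Fin n →₀ ℕ) (c : Polynomial ℚ), tb n i (monomial ν c) =
      monomial ν (Polynomial.X ^ (ν i) * c) := by
    intro ν c
    unfold tb
    rw [aeval_monomial]
    have : ∀ j, (if j = i then C Polynomial.X * X j else X j : MvPolynomial (Fin n) (Polynomial ℚ)) =
      (if j = i then C Polynomial.X else 1) * X j := by intro j; split_ifs <;> simp
    simp only [this, mul_pow]
    rw [Finsupp.prod_mul, monomial_eq, map_mul, algebraMap_eq]
    have : ν.prod (fun j k => (if j = i then C Polynomial.X else 1 : MvPolynomial (Fin n) (Polynomial ℚ)) ^ k)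
       = C (Polynomial.X ^ (ν i)) := by
      rw [Finsupp.prod_fintype _ _ (by simp)]
      simp [ite_pow]
    rw [this]
    ring
  induction g using MvPolynomial.induction_on' with
  | monomial ν c =>
    rw [key, coeff_monomial, coeff_monomial]
    split_ifs with h
    · rw [h]
    · simp
  | add p r hp hr => rw [map_add, coeff_add, coeff_add, hp, hr, mul_add]

/-- τ_0 over ℚ[q,t] -/
noncomputable def ta (n : ℕ) (hn : 0 < n) : MvPolynomial (Fin n) A0 →ₐ[A0] MvPolynomial (Fin n) A0 :=
  aeval (fun j => if j = ⟨0, hn⟩ then C (X 0) * X j else X j)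

lemma tau_red {n : ℕ} (hn : 0 < n) : Red (tauOp n q) (tb n ⟨0, hn⟩) := by
  refine ⟨0, fun g => ⟨ta n hn g, ?_, ?_⟩⟩
  · rw [pow_zero, one_smul]
    induction g using MvPolynomial.induction_on with
    | C a => simp [io, tauOp, ta]
    | add p r hp hr => simp only [map_add, hp, hr]
    | mul_X p k hp =>
      simp only [tauOp, AlgHom.toLinearMap_apply, map_mul] at hp ⊢
      rw [hp]
      simp only [io, map_X, aeval_X, ta]
      congr 1
      simp only [Fin.ext_iff]
      split_ifs <;> simp [q]
  · induction g using MvPolynomial.induction_on with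
    | C a => simp [rho, ta]
    | add p r hp hr => simp only [map_add, hp, hr]
    | mul_X p k hp =>
      rw [map_mul, map_mul, map_mul, map_mul, hp]
      have : rho n (ta n hn (X k)) =
          (tb n ⟨0, hn⟩) (rho n (X k)) := by
        simp only [rho, map_X, aeval_X, tb, ta]
        split_ifs <;> simp [phi]
      rw [this]

lemma sOp_red {n k : ℕ} (hk : k + 1 < n) : Red (sOp n k)
    (rename (Equiv.swap (⟨k, Nat.lt_of_succ_lt hk⟩ : Fin n) ⟨k + 1, hk⟩)) := by
  refine ⟨0, fun g => ⟨rename (Equiv.swap (⟨k, Nat.lt_of_succ_lt hk⟩ : Fin n) ⟨k + 1, hk⟩) g, ?_, ?_⟩⟩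
  · rw [pow_zero, one_smul, sOp_eq hk]
    simp [io, map_rename]
  · simp [rho, map_rename]

lemma rename_swap_comp {n : ℕ} {R : Type*} [CommRing R] (i j : Fin n) :
    (rename (Equiv.swap i j) : MvPolynomial (Fin n) R →ₐ[R] MvPolynomial (Fin n) R) ∘
      (rename (Equiv.swap i j)) = _root_.id := by
  funext f
  simp only [Function.comp, id]
  rw [rename_rename]
  have : (⇑(Equiv.swap i j) ∘ ⇑(Equiv.swap i j)) = _root_.id := by
    funext x; simp
  rw [this, rename_id_apply]

lemma Y0_red_aux {n : ℕ} {T : ℕ → P n →ₗ[K] P n} (hT : IsDL n t T) (hn : 0 < n) (m : ℕ)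
    (hm : m < n) : ∃ G F, Red ((((List.range m).map T).prod : Module.End K (P n))) G ∧
      Red ((List.range m).foldl (fun acc k => sOp n k ∘ₗ acc) (tauOp n q)) F ∧
      G ∘ F = tb n ⟨0, hn⟩ := by
  induction m with
  | zero => exact ⟨_root_.id, _, Red.id, tau_red hn, rfl⟩
  | succ m ih =>
    obtain ⟨G, F, hG, hF, hGF⟩ := ih (by omega)
    have h1 := (DL_of_isDL hT hm).red (by simp)
    refine ⟨G ∘ rename (Equiv.swap (⟨m, Nat.lt_of_succ_lt hm⟩ : Fin n) ⟨m + 1, hm⟩),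
      rename (Equiv.swap (⟨m, Nat.lt_of_succ_lt hm⟩ : Fin n) ⟨m + 1, hm⟩) ∘ F, ?_, ?_, ?_⟩
    · rw [List.range_succ, List.map_append, List.prod_append]
      simp only [List.map_cons, List.map_nil, List.prod_cons, List.prod_nil, mul_one]
      exact hG.comp h1
    · rw [List.range_succ, List.foldl_append]
      exact (sOp_red hm).comp hF
    · rw [← hGF]
      have := rename_swap_comp (R := Polynomial ℚ) (⟨m, Nat.lt_of_succ_lt hm⟩ : Fin n) ⟨m + 1, hm⟩
      rw [Function.comp_assoc, ← Function.comp_assoc (rename _) (rename _) F, this]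
      rfl

lemma Red.smul_t {n : ℕ} {L : P n →ₗ[K] P n} {σ} (hL : Red L σ) : Red (t • L) σ := by
  obtain ⟨m, hm⟩ := hL
  refine ⟨m, fun g => ?_⟩
  obtain ⟨h, h1, h2⟩ := hm g
  refine ⟨C (X 1 ^ 1) * h, ?_, ?_⟩
  · rw [← t_smul_io, ← h1, LinearMap.smul_apply, pow_one, smul_comm]
  · rw [rho_t, h2]

lemma tb_conj {n : ℕ} (i j : Fin n) : (rename (Equiv.swap i j)) ∘ (tb n i) ∘
    (rename (Equiv.swap i j)) = tb n j := by
  have : ((rename (Equiv.swap i j)).comp (tb n i)).comp (rename (Equiv.swap i j)) = tb n j := by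
    apply MvPolynomial.algHom_ext
    intro l
    simp only [AlgHom.comp_apply, rename_X, tb, aeval_X]
    by_cases h : l = j
    · subst h; simp
    · have : Equiv.swap i j l ≠ i := by
        intro h'
        apply h
        rw [← Equiv.swap_apply_self i j l, h', Equiv.swap_apply_left]
      simp [h, this]
  rw [← this]
  rfl

lemma Y_red {n : ℕ} {T : ℕ → P n →ₗ[K] P n} (hT : IsDL n t T) (i : ℕ) (hi : i < n) :
    Red (YY (A := Module.End K (P n)) (n - 1) T (omegaOp n q) i) (tb n ⟨i, hi⟩) := by
  induction i with
  | zero =>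
    obtain ⟨G, F, hG, hF, hGF⟩ := Y0_red_aux hT hi (n - 1) (by omega)
    rw [← hGF]
    unfold YY AA BB
    apply Red.inv_smul
    simp only [List.range_zero, List.map_nil, List.prod_nil, mul_one, Nat.sub_zero]
    rw [← List.range_eq_range']
    exact hG.comp hF
  | succ i ih =>
    rw [(hecke_of_isDL hT).YY_succ (by omega)]
    apply Red.smul_t
    rw [← tb_conj ⟨i, by omega⟩ ⟨i + 1, hi⟩]
    have h1 := (DL_of_isDL hT hi).red_inv (by simp)
    exact (h1.comp (ih (by omega))).comp h1

/-- Main vanishing lemma. -/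
lemma vanish {n : ℕ} {J : Type*} (L : J → P n →ₗ[K] P n)
    (w : J → (Fin n →₀ ℕ) → Polynomial ℚ)
    (hL : ∀ j, ∃ m : ℕ, ∀ g, ∃ h, t ^ m • L j (io n g) = io n h ∧
      ∀ η, phi (coeff η h) = w j η * phi (coeff η g))
    (lam : J → K) (lb : J → Polynomial ℚ)
    (hlam : ∀ j, ∃ (m : ℕ) (l : A0), t ^ m * lam j = algebraMap A0 K l ∧ phi l = lb j)
    (F : P n) (hF : ∀ j, L j F = lam j • F)
    (hne : ∀ η, coeff η F ≠ 0 → ∃ j, w j η ≠ lb j) : F = 0 := by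
  obtain ⟨b, hb⟩ := IsLocalization.exist_integer_multiples_of_finset (nonZeroDivisors A0)
    (F.support.image fun η => coeff η F)
  have hb0 : (b : A0) ≠ 0 := nonZeroDivisors.coe_ne_zero b
  have hlift : ∃ g, io n g = C (algebraMap A0 K b) * F := by
    have : ∀ η, ∃ a : A0, algebraMap A0 K a = algebraMap A0 K b * coeff η F := by
      intro η
      by_cases h : coeff η F = 0
      · exact ⟨0, by simp [h]⟩
      · obtain ⟨a, ha⟩ := hb (coeff η F) (Finset.mem_image_of_mem _ (mem_support_iff.mpr h))
        exact ⟨a, by rw [ha, Algebra.smul_def]⟩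
    choose a ha using this
    refine ⟨∑ η ∈ F.support, monomial η (a η), ?_⟩
    simp only [io, map_sum, map_monomial, ha]
    conv_rhs => rw [F.as_sum, Finset.mul_sum]
    simp [C_mul_monomial]
  obtain ⟨g, hg⟩ := hlift
  have hba : algebraMap A0 K b ≠ 0 := by
    rwa [Ne, map_eq_zero_iff _ (IsFractionRing.injective A0 K)]
  have step : ∀ g : MvPolynomial (Fin n) A0, (∀ j, L j (io n g) = lam j • io n g) →
      (∀ η, coeff η g ≠ 0 → ∃ j, w j η ≠ lb j) → ∀ η, (X 1 - 1 : A0) ∣ coeff η g := by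
    intro g h1 h2 η
    by_cases h0 : coeff η g = 0
    · rw [h0]; exact dvd_zero _
    obtain ⟨j, hj⟩ := h2 η h0
    apply phi_ker
    obtain ⟨m, hm⟩ := hL j
    obtain ⟨h, e1, e2⟩ := hm g
    obtain ⟨m', l, e3, e4⟩ := hlam j
    have e5 : C (X 1 ^ m') * h = C (X 1 ^ m * l) * g := by
      apply io_inj n
      rw [← t_smul_io, ← e1, h1, C_mul, mul_assoc, ← t_smul_io, map_mul]
      have : io n (C l) = C (t ^ m' * lam j) := by rw [e3]; simp [io]
      rw [this, smul_comm, smul_smul, ← smul_eq_C_mul, mul_smul, mul_smul]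
    have e6 := congrArg (fun p => phi (coeff η p)) e5
    simp only [coeff_C_mul] at e6
    rw [map_mul, map_mul, map_mul, e2, e4] at e6
    have e7 : phi (X 1 ^ m') = 1 := by simp [phi]
    have e8 : phi (X 1 ^ m) = 1 := by simp [phi]
    rw [e7, e8, one_mul, one_mul] at e6
    have : (w j η - lb j) * phi (coeff η g) = 0 := by rw [sub_mul, e6, sub_self]
    exact (mul_eq_zero.mp this).resolve_left (sub_ne_zero.mpr hj)
  have t1 : (X 1 - 1 : A0) ≠ 0 := by
    intro h
    have := congrArg (aeval (fun _ => (0 : ℚ))) h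
    simp at this
  have pw : ∀ (k : ℕ) (g : MvPolynomial (Fin n) A0), (∀ j, L j (io n g) = lam j • io n g) →
      (∀ η, coeff η g ≠ 0 → ∃ j, w j η ≠ lb j) → ∀ η, (X 1 - 1 : A0) ^ k ∣ coeff η g := by
    intro k
    induction k with
    | zero => intro g _ _ η; simp
    | succ k ih =>
      intro g h1 h2 η
      have hd := step g h1 h2
      obtain ⟨g', rfl⟩ := C_dvd_iff_dvd_coeff _ g |>.mpr hd
      have : (X 1 - 1 : A0) ^ k ∣ coeff η g' := by
        apply ih
        · intro j
          have := h1 j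
          have e : io n (C (X 1 - 1) * g') = (t - 1) • io n g' := by
            rw [smul_eq_C_mul]; simp [io, t]
          rw [e, map_smul, smul_comm] at this
          have t2 : t - 1 ≠ 0 := by
            have e : t - 1 = algebraMap A0 K (X 1 - 1) := by simp [t]
            rw [e, Ne, map_eq_zero_iff _ (IsFractionRing.injective A0 K)]
            exact t1
          exact smul_right_injective _ t2 this
        · intro η h
          apply h2
          rw [coeff_C_mul]
          exact mul_ne_zero t1 h
      rw [coeff_C_mul, pow_succ, mul_comm]
      exact mul_dvd_mul_left _ this
  have g0 : g = 0 := by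
    ext1 η
    by_contra hη
    have hk := fun k => pw k g (by
      intro j
      rw [hg, ← smul_eq_C_mul, map_smul, hF, smul_comm]) (by
      intro η h
      apply hne
      intro h'
      apply h
      have := congrArg (coeff η) hg
      rw [coeff_C_mul, h', mul_zero] at this
      simp only [io, coeff_map] at this
      rwa [map_eq_zero_iff _ (IsFractionRing.injective A0 K)] at this) η
    have nu : ¬ IsUnit (X 1 - 1 : A0) := by
      intro h
      have := h.map (aeval (fun _ => (1 : ℚ)))
      simp at this
    obtain ⟨k, hk'⟩ := FiniteMultiplicity.of_not_isUnit nu hη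
    exact hk' (hk (k + 1))
  rw [g0, map_zero] at hg
  exact (mul_eq_zero.mp hg.symm).resolve_left (fun h => hba (C_eq_zero.mp h))

lemma phi_lam (a l : ℕ) : ∃ (m : ℕ) (c : A0), t ^ m * (q ^ a / t ^ l) = algebraMap A0 K c ∧
    phi c = Polynomial.X ^ a := by
  refine ⟨l, X 0 ^ a, ?_, ?_⟩
  · have := pow_ne_zero l t_ne
    field_simp
    simp [q]
  · simp [phi]

/-- Uniqueness of joint eigenvectors. -/
lemma joint_unique {n : ℕ} {T : ℕ → P n →ₗ[K] P n} (hT : IsDL n t T) (η : Fin n → ℕ)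
    (l : Fin n → ℕ) (F : P n) (hF : ∀ i, Yop n q t T i F = (q ^ η i / t ^ l i) • F)
    (h0 : coeff (Finsupp.equivFunOnFinite.symm η) F = 0) : F = 0 := by
  refine vanish (fun i => Yop n q t T i) (fun i ν => Polynomial.X ^ ν i) ?_
    (fun i => q ^ η i / t ^ l i) (fun i => Polynomial.X ^ η i) (fun i => phi_lam _ _) F hF ?_
  · intro i
    obtain ⟨m, hm⟩ := Y_red hT i i.2
    refine ⟨m, fun g => ?_⟩
    obtain ⟨h, h1, h2⟩ := hm g
    refine ⟨h, by rw [Yop_eq]; exact h1, fun ν => ?_⟩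
    have := congrArg (coeff ν) h2
    rw [tb_coeff] at this
    simpa only [rho_coeff] using this
  · intro ν hν
    by_contra hc
    push Not at hc
    apply hν
    rw [← h0]
    congr 1
    ext i
    have := congrArg Polynomial.natDegree (hc i)
    simpa using this

lemma sum_unique {n : ℕ} {T : ℕ → P n →ₗ[K] P n} (hT : IsDL n t T) (κ : Fin n → ℕ)
    (F : P n) (hF : (∑ i, Yop n q t T i) F = (∑ i : Fin n, q ^ κ i * (t ^ (i : ℕ))⁻¹) • F)
    (h0 : ∀ η : Fin n →₀ ℕ, (∑ i, Polynomial.X ^ η i : Polynomial ℚ) = ∑ i, Polynomial.X ^ κ i →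
      coeff η F = 0) : F = 0 := by
  refine vanish (J := Unit) (fun _ => ∑ i, Yop n q t T i) (fun _ ν => ∑ i, Polynomial.X ^ ν i) ?_
    (fun _ => ∑ i : Fin n, q ^ κ i * (t ^ (i : ℕ))⁻¹) (fun _ => ∑ i, Polynomial.X ^ κ i)
    ?_ F (fun _ => hF) ?_
  · intro _
    have hr : ∀ i : Fin n, Red (Yop n q t T i) (tb n i) := by
      intro i
      rw [Yop_eq]
      exact Y_red hT i i.2
    obtain ⟨m, hm⟩ := Red.sum univ _ _ hr
    refine ⟨m, fun g => ?_⟩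
    obtain ⟨h, h1, h2⟩ := hm g
    refine ⟨h, h1, fun ν => ?_⟩
    have := congrArg (coeff ν) h2
    rw [coeff_sum] at this
    simp only [tb_coeff] at this
    rw [Finset.sum_mul]
    simpa only [rho_coeff] using this
  · intro _
    refine ⟨n, ∑ i : Fin n, X 0 ^ κ i * X 1 ^ (n - (i : ℕ)), ?_, ?_⟩
    · rw [Finset.mul_sum, map_sum]
      apply Finset.sum_congr rfl
      intro i _
      have h1 : t ^ n = t ^ (n - (i : ℕ)) * t ^ (i : ℕ) := by
        rw [← pow_add]; congr 1; omega
      have := pow_ne_zero (i : ℕ) t_ne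
      rw [h1, map_mul, map_pow, map_pow]
      change _ = q ^ _ * t ^ _
      field_simp
    · simp [phi]
  · intro ν hν
    refine ⟨(), fun h => hν (h0 ν h)⟩

end S7Aux

open Finset MvPolynomial
open Stmt7
namespace S7Aux

lemma sortDesc_perm {n : ℕ} (ν : Fin n → ℕ) : ∃ σ : Equiv.Perm (Fin n), sortDesc n ν = ν ∘ σ :=
  ⟨Fin.revPerm.trans (Tuple.sort ν), rfl⟩

lemma sortDesc_anti {n : ℕ} (ν : Fin n → ℕ) : Antitone (sortDesc n ν) := by
  intro a b h
  exact Tuple.monotone_sort ν (Fin.rev_le_rev.mpr h)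

lemma sortDesc_comp {n : ℕ} (ν : Fin n → ℕ) (σ : Equiv.Perm (Fin n)) :
    sortDesc n (ν ∘ σ) = sortDesc n ν := by
  have := Tuple.comp_perm_comp_sort_eq_comp_sort (f := ν) (σ := σ)
  funext i
  exact congrFun this i.rev

lemma sortDesc_self {n : ℕ} {κ : Fin n → ℕ} (h : Antitone κ) : sortDesc n κ = κ := by
  rw [← sortDesc_comp κ Fin.revPerm]
  have hm : Monotone (κ ∘ Fin.revPerm) := fun a b hab => h (Fin.rev_le_rev.mpr hab)
  funext i
  have := Tuple.sort_eq_refl_iff_monotone.mpr hm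
  unfold sortDesc
  rw [this]
  simp

/-- truncated sums -/
def hc {n : ℕ} (c : ℕ) (η : Fin n → ℕ) : ℕ := ∑ i, (η i - c)

lemma hc_comp {n : ℕ} (c : ℕ) (η : Fin n → ℕ) (σ : Equiv.Perm (Fin n)) : hc c (η ∘ σ) = hc c η :=
  Equiv.sum_comp σ (fun i => η i - c)

lemma hc_sort {n : ℕ} (c : ℕ) (η : Fin n → ℕ) : hc c (sortDesc n η) = hc c η := by
  obtain ⟨σ, h⟩ := sortDesc_perm η
  rw [h, hc_comp]

lemma hc_le {n : ℕ} (c : ℕ) {lm κ : Fin n → ℕ} (ha : Antitone lm) (h : domLE n lm κ) :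
    hc c lm ≤ hc c κ := by
  classical
  unfold hc
  set S := univ.filter (fun i => c < lm i) with hS
  have e1 : ∑ i, (lm i - c) = ∑ i ∈ S, (lm i - c) := by
    symm
    apply Finset.sum_subset (Finset.subset_univ _)
    intro i _ hi
    simp [hS] at hi
    omega
  rcases S.eq_empty_or_nonempty with he | hne
  · rw [e1, he]; simp
  set p := S.max' hne
  have hp : c < lm p := by
    have := S.max'_mem hne
    simp only [hS, Finset.mem_filter] at this
    exact this.2
  have hSp : S = univ.filter (· ≤ p) := by
    ext i
    constructor
    · intro hi
      simp only [Finset.mem_filter, Finset.mem_univ, true_and]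
      exact S.le_max' i hi
    · intro hi
      simp only [Finset.mem_filter, Finset.mem_univ, true_and, hS] at hi ⊢
      exact lt_of_lt_of_le hp (ha hi)
  have h2 := h.2 p
  rw [← hSp] at h2
  have e2 : ∑ i ∈ S, (lm i - c) + ∑ i ∈ S, c = ∑ i ∈ S, lm i := by
    rw [← Finset.sum_add_distrib]
    apply Finset.sum_congr rfl
    intro i hi
    simp only [hS, Finset.mem_filter] at hi
    omega
  have e3 : ∑ i ∈ S, κ i ≤ ∑ i ∈ S, (κ i - c) + ∑ i ∈ S, c := by
    rw [← Finset.sum_add_distrib]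
    apply Finset.sum_le_sum
    intro i _
    omega
  have e4 : ∑ i ∈ S, (κ i - c) ≤ ∑ i, (κ i - c) :=
    Finset.sum_le_sum_of_subset (Finset.subset_univ _)
  omega

lemma domLE_sort {n : ℕ} {κ ν : Fin n → ℕ} (hκ : Antitone κ) (h : sortDesc n ν = κ) (p : Fin n) :
    ∑ i ∈ univ.filter (· ≤ p), ν i ≤ ∑ i ∈ univ.filter (· ≤ p), κ i := by
  set S := univ.filter (· ≤ p)
  have e1 : ∑ i ∈ S, ν i ≤ ∑ i ∈ S, (ν i - κ p) + ∑ i ∈ S, κ p := by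
    rw [← Finset.sum_add_distrib]
    apply Finset.sum_le_sum
    intro i _
    omega
  have e2 : ∑ i ∈ S, (ν i - κ p) ≤ hc (κ p) ν :=
    Finset.sum_le_sum_of_subset (Finset.subset_univ _)
  have e3 : hc (κ p) ν = hc (κ p) κ := by rw [← hc_sort, h]
  have e4 : hc (κ p) κ = ∑ i ∈ S, (κ i - κ p) := by
    symm
    apply Finset.sum_subset (Finset.subset_univ _)
    intro i _ hi
    simp only [S, Finset.mem_filter, Finset.mem_univ, true_and, not_le] at hi
    have := hκ hi.le
    omega
  have e5 : ∑ i ∈ S, (κ i - κ p) + ∑ i ∈ S, κ p = ∑ i ∈ S, κ i := by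
    rw [← Finset.sum_add_distrib]
    apply Finset.sum_congr rfl
    intro i hi
    simp only [S, Finset.mem_filter, Finset.mem_univ, true_and] at hi
    have := hκ hi
    omega
  omega

lemma eq_of_domLE {n : ℕ} {κ ν : Fin n → ℕ} (hκ : Antitone κ) (h : sortDesc n ν = κ)
    (hd : domLE n κ ν) : κ = ν := by
  have hs : ∀ p, ∑ i ∈ univ.filter (· ≤ p), κ i = ∑ i ∈ univ.filter (· ≤ p), ν i := fun p =>
    le_antisymm (hd.2 p) (domLE_sort hκ h p)
  have hind : ∀ m (hm : m < n), κ ⟨m, hm⟩ = ν ⟨m, hm⟩ := by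
    intro m
    induction m using Nat.strong_induction_on with
    | _ m ih =>
      intro hm
      have h1 := hs ⟨m, hm⟩
      have hmem : (⟨m, hm⟩ : Fin n) ∈ univ.filter (· ≤ (⟨m, hm⟩ : Fin n)) := by simp
      rw [← Finset.add_sum_erase _ _ hmem, ← Finset.add_sum_erase _ _ hmem] at h1
      have h2 : ∑ i ∈ (univ.filter (· ≤ (⟨m, hm⟩ : Fin n))).erase ⟨m, hm⟩, κ i =
        ∑ i ∈ (univ.filter (· ≤ (⟨m, hm⟩ : Fin n))).erase ⟨m, hm⟩, ν i := by
        apply Finset.sum_congr rfl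
        rintro ⟨i, hi⟩ hi'
        simp only [Finset.mem_erase, Finset.mem_filter, Finset.mem_univ, true_and, Fin.mk_le_mk, ne_eq, Fin.mk.injEq] at hi'
        exact ih i (by omega) hi
      omega
  funext i
  exact hind i i.2

noncomputable abbrev ee {n : ℕ} (η : Fin n → ℕ) : Fin n →₀ ℕ := Finsupp.equivFunOnFinite.symm η

lemma coeff_rename_perm {n : ℕ} (σ : Equiv.Perm (Fin n)) (f : P n) (μ : Fin n → ℕ) :
    coeff (ee μ) (rename σ f) = coeff (ee (μ ∘ σ)) f := by
  have h := coeff_rename_mapDomain σ σ.injective f (ee (μ ∘ σ))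
  have e : (ee (μ ∘ σ)).mapDomain σ = ee μ := by
    ext i
    rw [Finsupp.mapDomain_equiv_apply]
    simp [ee]
  rw [e] at h
  exact h

/-- one step of raising -/
lemma DL.coeff_step {n : ℕ} {i j : Fin n} (hij : i ≠ j) {T : P n →ₗ[K] P n} (h : DL i j T) (f : P n)
    (μ : Fin n →₀ ℕ) : coeff μ (T f) = t * coeff μ (rename (Equiv.swap i j) f) +
      (if μ j = 0 then 0 else
        coeff (Finsupp.single i 1 + μ - Finsupp.single j 1) (T f) +
        (1 - t) * coeff (Finsupp.single i 1 + μ - Finsupp.single j 1) f -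
        coeff (Finsupp.single i 1 + μ - Finsupp.single j 1) (rename (Equiv.swap i j) f)) := by
  have h1 := congrArg (coeff (Finsupp.single i 1 + μ)) (h f)
  have e : (1 - C t) * X j * f = C (1 - t) * (X j * f) := by rw [map_sub, map_one]; ring
  rw [e, sub_mul, sub_mul, coeff_add, coeff_sub, coeff_sub, mul_assoc (C t), coeff_C_mul,
    coeff_C_mul, coeff_X_mul, coeff_X_mul, coeff_X_mul', coeff_X_mul', coeff_X_mul'] at h1
  have hs : j ∈ (Finsupp.single i 1 + μ).support ↔ μ j ≠ 0 := by
    rw [Finsupp.mem_support_iff]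
    simp [Finsupp.single_apply, hij]
  simp only [hs, ne_eq, ite_not] at h1
  split_ifs at h1 ⊢ with h0
  · linear_combination h1
  · linear_combination h1

lemma hc_raise {n : ℕ} {i j : Fin n} (hij : i ≠ j) (η : Fin n →₀ ℕ) (c : ℕ) (h1 : c ≤ η i)
    (h2 : η j ≤ c) : hc c η < hc c (Finsupp.single i 1 + η - Finsupp.single j 1 : Fin n →₀ ℕ) := by
  unfold hc
  have val : ∀ k, (Finsupp.single i 1 + η - Finsupp.single j 1 : Fin n →₀ ℕ) k =
      (if i = k then 1 else 0) + η k - (if j = k then 1 else 0) := by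
    intro k; simp [Finsupp.single_apply]
  apply Finset.sum_lt_sum
  · intro k _
    rw [val]
    by_cases hk : j = k
    · subst hk
      simp [hij]; omega
    · simp [hk]; split_ifs <;> omega
  · refine ⟨i, Finset.mem_univ _, ?_⟩
    rw [val]
    simp [hij.symm]; omega

lemma ee_coe {n : ℕ} (η : Fin n →₀ ℕ) : ee (⇑η) = η := by ext; simp [ee]

lemma DL.coeff_big {n : ℕ} {i j : Fin n} (hij : i ≠ j) {T : P n →ₗ[K] P n} (h : DL i j T) (f : P n)
    (c M : ℕ) (hf : ∀ η : Fin n →₀ ℕ, M < hc c η → coeff η f = 0) (d : ℕ) :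
    ∀ η : Fin n →₀ ℕ, η j = d → c ≤ η i → η j ≤ c → M < hc c η → coeff η (T f) = 0 := by
  have hf2 : ∀ η : Fin n →₀ ℕ, M < hc c η → coeff η (rename (Equiv.swap i j) f) = 0 := by
    intro η hη
    rw [← ee_coe η, coeff_rename_perm]
    apply hf
    have : ⇑(ee (⇑η ∘ ⇑(Equiv.swap i j))) = ⇑η ∘ ⇑(Equiv.swap i j) := rfl
    rw [this, hc_comp]
    exact hη
  induction d with
  | zero =>
    intro η h0 h1 h2 h3
    rw [h.coeff_step hij, if_pos h0, hf2 η h3]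
    simp
  | succ d ih =>
    intro η h0 h1 h2 h3
    have hb := hc_raise hij η c h1 h2
    have hb' := lt_trans h3 hb
    have v1 : (Finsupp.single i 1 + η - Finsupp.single j 1 : Fin n →₀ ℕ) j = d := by
      simp [Finsupp.single_apply, hij, h0]
    have v2 : (Finsupp.single i 1 + η - Finsupp.single j 1 : Fin n →₀ ℕ) i = η i + 1 := by
      simp [Finsupp.single_apply, hij.symm]; omega
    rw [h.coeff_step hij, if_neg (by omega), hf2 η h3, hf _ hb', hf2 _ hb',
      ih _ v1 (by omega) (by omega) hb']
    simp

lemma DL.coeff_top {n : ℕ} {i j : Fin n} (hij : i ≠ j) {T : P n →ₗ[K] P n} (h : DL i j T) (f : P n)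
    (μ : Fin n → ℕ) (hμ : μ j ≤ μ i)
    (hf : ∀ c, ∀ η : Fin n →₀ ℕ, hc c μ < hc c η → coeff η f = 0) :
    coeff (ee μ) (T f) = t * coeff (ee (μ ∘ Equiv.swap i j)) f := by
  rw [h.coeff_step hij, coeff_rename_perm]
  split_ifs with h0
  · simp
  · have hb := hc_raise hij (ee μ) (μ i) le_rfl hμ
    set η : Fin n →₀ ℕ := Finsupp.single i 1 + ee μ - Finsupp.single j 1 with hη
    have hb' : hc (μ i) μ < hc (μ i) η := hb
    have v1 : η j ≤ μ i := by
      have : η j = μ j - 1 := by simp [hη, Finsupp.single_apply, hij]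
      omega
    have v2 : μ i ≤ η i := by
      have : η i = μ i + 1 := by simp [hη, Finsupp.single_apply, hij.symm]; omega
      omega
    have z : coeff η (rename (Equiv.swap i j) f) = 0 := by
      rw [← ee_coe η, coeff_rename_perm]
      apply hf (μ i)
      have : ⇑(ee (⇑η ∘ ⇑(Equiv.swap i j))) = ⇑η ∘ ⇑(Equiv.swap i j) := rfl
      rw [this, hc_comp]
      exact hb'
    rw [h.coeff_big hij f (μ i) _ (hf (μ i)) _ η rfl v2 v1 hb', hf _ η hb', z]
    simp

lemma mac_vanish {n : ℕ} {T : ℕ → P n →ₗ[K] P n} {κ ν : Fin n → ℕ} {E : P n}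
    (hν : sortDesc n ν = κ) (hE : IsNSMac n q t T ν E) (μ : Fin n → ℕ) (hμ : sortDesc n μ = κ)
    (c : ℕ) (η : Fin n →₀ ℕ) (h : hc c μ < hc c η) : coeff η E = 0 := by
  by_contra h0
  have hle : hc c η ≤ hc c κ := by
    rcases hE.2.1 η h0 with h1 | h1 | h1
    · rw [h1, ← hc_sort, hν]
    · rw [← hc_sort]
      have := h1.1
      rw [hν] at this
      exact hc_le c (sortDesc_anti _) this
    · rw [← hc_sort, h1.1, hν]
  have : hc c μ = hc c κ := by rw [← hc_sort, hμ]
  omega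

lemma mac_zero {n : ℕ} {T : ℕ → P n →ₗ[K] P n} {ν : Fin n → ℕ} {E : P n}
    (hE : IsNSMac n q t T ν E) {i j : Fin n} (hij : i < j) (h : ν i < ν j) :
    coeff (ee (ν ∘ Equiv.swap i j)) E = 0 := by
  by_contra h0
  have hi : (ν ∘ Equiv.swap i j) i = ν j := by simp
  rcases hE.2.1 _ h0 with h1 | h1 | h1
  · have := congrFun h1 i
    simp at this
    omega
  · apply h1.2
    exact sortDesc_comp ν (Equiv.swap i j)
  · have h2 := h1.2.1.2 i
    refine absurd h2 (not_le.mpr ?_)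
    apply Finset.sum_lt_sum
    · intro k hk
      simp only [Finset.mem_filter, Finset.mem_univ, true_and] at hk
      change ν k ≤ (ν ∘ Equiv.swap i j) k
      by_cases hki : k = i
      · subst hki; simp; omega
      · have : k ≠ j := by rintro rfl; exact absurd hij (not_lt.mpr hk)
        simp [Equiv.swap_apply_of_ne_of_ne hki this]
    · refine ⟨i, by simp, ?_⟩
      change ν i < (ν ∘ Equiv.swap i j) i
      rw [hi]; exact h

end S7Aux

open Finset MvPolynomial
open Stmt7
namespace S7Aux

lemma swap_lt {n : ℕ} {i j : Fin n} (hij : (j : ℕ) = i + 1) (k m : Fin n) :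
    (Equiv.swap i j k < Equiv.swap i j m) ↔ ((k < m ∧ ¬(k = i ∧ m = j)) ∨ (k = j ∧ m = i)) := by
  simp only [Equiv.swap_apply_def, Fin.lt_def, Fin.ext_iff]
  split_ifs <;> omega

lemma legCo_eq {n : ℕ} (η : Fin n → ℕ) (m : Fin n) : legCo n η m =
    ∑ k, ((if k < m ∧ η m ≤ η k then 1 else 0) + (if m < k ∧ η m < η k then 1 else 0)) := by
  rw [Finset.sum_add_distrib, legCo, Finset.card_filter, Finset.card_filter]

lemma leg_eq {n : ℕ} (η : Fin n → ℕ) (m : Fin n) (p : ℕ) : leg n η m p =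
    ∑ k, ((if m < k ∧ p ≤ η k ∧ η k ≤ η m then 1 else 0) +
      (if k < m ∧ p ≤ η k + 1 ∧ η k + 1 ≤ η m then 1 else 0)) := by
  rw [Finset.sum_add_distrib, leg, Finset.card_filter, Finset.card_filter]

lemma cases_ij {n : ℕ} (i j m : Fin n) : m = i ∨ m = j ∨ (m ≠ i ∧ m ≠ j) := by tauto

lemma legCo_swap {n : ℕ} {i j : Fin n} (hij : (j : ℕ) = i + 1) (ν : Fin n → ℕ) (h : ν i ≠ ν j)
    (m : Fin n) : legCo n (ν ∘ Equiv.swap i j) (Equiv.swap i j m) = legCo n ν m := by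
  rw [legCo_eq, legCo_eq, ← Equiv.sum_comp (Equiv.swap i j)]
  apply Finset.sum_congr rfl
  intro k _
  simp only [swap_lt hij, Function.comp, Equiv.swap_apply_self]
  have hne : i ≠ j := by rintro rfl; omega
  have hlt : i < j := by rw [Fin.lt_def]; omega
  have hm := cases_ij i j m
  rcases cases_ij i j k with rfl | rfl | ⟨h1, h2⟩ <;>
    rcases hm with rfl | rfl | ⟨h3, h4⟩ <;>
    simp_all [hne.symm] <;> split_ifs <;> omega

lemma legCo_eq_case {n : ℕ} {i j : Fin n} (hij : (j : ℕ) = i + 1) (ν : Fin n → ℕ) (h : ν i = ν j) :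
    legCo n ν j = legCo n ν i + 1 := by
  rw [legCo_eq, legCo_eq, ← Equiv.sum_comp (Equiv.swap i j)
    (fun k => ((if k < i ∧ ν i ≤ ν k then 1 else 0) + (if i < k ∧ ν i < ν k then 1 else 0)))]
  have : (1 : ℕ) = ∑ k, if k = i then 1 else 0 := by simp
  rw [this, ← Finset.sum_add_distrib]
  apply Finset.sum_congr rfl
  intro k _
  have hne : i ≠ j := by rintro rfl; omega
  have hlt : i < j := by rw [Fin.lt_def]; omega
  rcases cases_ij i j k with rfl | rfl | ⟨h1, h2⟩
  · simp [h, hlt, hlt.le]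
  · simp [hne.symm]
  · have e1 : k < j ↔ k < i := by rw [Fin.lt_def, Fin.lt_def]; omega
    have e2 : j < k ↔ i < k := by rw [Fin.lt_def, Fin.lt_def]; omega
    simp [Equiv.swap_apply_of_ne_of_ne h1 h2, h1, e1, e2, h]

lemma legCo_diff {n : ℕ} {i j : Fin n} (hij : (j : ℕ) = i + 1) (ν : Fin n → ℕ) (h : ν i < ν j) :
    legCo n ν i = legCo n ν j + leg n ν j (ν i + 1) := by
  rw [legCo_eq, legCo_eq, leg_eq, ← Equiv.sum_comp (Equiv.swap i j)
    (fun k => ((if k < i ∧ ν i ≤ ν k then 1 else 0) + (if i < k ∧ ν i < ν k then 1 else 0))),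
    ← Finset.sum_add_distrib]
  apply Finset.sum_congr rfl
  intro k _
  have hne : i ≠ j := by rintro rfl; omega
  have hlt : i < j := by rw [Fin.lt_def]; omega
  rcases cases_ij i j k with rfl | rfl | ⟨h1, h2⟩
  · simp [h, hlt, not_lt.mpr hlt.le]
  · simp
  · have e1 : k < j ↔ k < i := by rw [Fin.lt_def, Fin.lt_def]; omega
    have e2 : j < k ↔ i < k := by rw [Fin.lt_def, Fin.lt_def]; omega
    simp only [Equiv.swap_apply_of_ne_of_ne h1 h2, e1, e2, Fin.lt_def]
    split_ifs <;> omega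

lemma leg_swap {n : ℕ} {i j : Fin n} (hij : (j : ℕ) = i + 1) (ν : Fin n → ℕ) (h : ν i < ν j)
    (m : Fin n) (p : ℕ) :
    leg n ν m p = leg n (ν ∘ Equiv.swap i j) (Equiv.swap i j m) p +
      (if m = j ∧ p = ν i + 1 then 1 else 0) := by
  have : (if m = j ∧ p = ν i + 1 then 1 else 0) =
    ∑ k, if k = i then (if m = j ∧ p = ν i + 1 then 1 else 0) else 0 := by simp
  rw [this, leg_eq, leg_eq, ← Equiv.sum_comp (Equiv.swap i j) (fun k =>
    ((if Equiv.swap i j m < k ∧ p ≤ (ν ∘ Equiv.swap i j) k ∧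
        (ν ∘ Equiv.swap i j) k ≤ (ν ∘ Equiv.swap i j) (Equiv.swap i j m) then 1 else 0) +
      (if k < Equiv.swap i j m ∧ p ≤ (ν ∘ Equiv.swap i j) k + 1 ∧
        (ν ∘ Equiv.swap i j) k + 1 ≤ (ν ∘ Equiv.swap i j) (Equiv.swap i j m) then 1 else 0))),
    ← Finset.sum_add_distrib]
  apply Finset.sum_congr rfl
  intro k _
  simp only [swap_lt hij, Function.comp, Equiv.swap_apply_self]
  have hne : i ≠ j := by rintro rfl; omega
  have hlt : i < j := by rw [Fin.lt_def]; omega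
  have hm := cases_ij i j m
  rcases cases_ij i j k with rfl | rfl | ⟨h1, h2⟩ <;>
    rcases hm with rfl | rfl | ⟨h3, h4⟩ <;>
    simp_all [hne.symm] <;> split_ifs <;> omega

lemma prod_off {ι : Type*} [DecidableEq ι] (s : Finset ι) (f g : ι → K) (a : ι) (ha : a ∈ s)
    (h : ∀ b ∈ s, b ≠ a → f b = g b) : (∏ b ∈ s, f b) * g a = (∏ b ∈ s, g b) * f a := by
  rw [← Finset.mul_prod_erase s f ha, ← Finset.mul_prod_erase s g ha,
    Finset.prod_congr rfl (fun b hb => h b (Finset.mem_of_mem_erase hb) (Finset.ne_of_mem_erase hb))]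
  ring

lemma dP_swap {n : ℕ} {i j : Fin n} (hij : (j : ℕ) = i + 1) (ν : Fin n → ℕ) (h : ν i < ν j) :
    ∃ l : ℕ, legCo n ν i = legCo n ν j + (l + 1) ∧
      dP' n ν * (1 - q ^ (ν j - ν i) * t ^ l) =
      dP' n (ν ∘ Equiv.swap i j) * (1 - q ^ (ν j - ν i) * t ^ (l + 1)) := by
  refine ⟨leg n (ν ∘ Equiv.swap i j) (Equiv.swap i j j) (ν i + 1), ?_, ?_⟩
  · rw [legCo_diff hij ν h, leg_swap hij ν h]; simp
  · unfold dP'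
    rw [← Equiv.prod_comp (Equiv.swap i j) (fun i_1 => ∏ j_1 ∈ Finset.Icc 1 ((ν ∘ Equiv.swap i j) i_1),
      (1 - q ^ ((ν ∘ Equiv.swap i j) i_1 - j_1 + 1) * t ^ leg n (ν ∘ Equiv.swap i j) i_1 j_1))]
    simp only [Function.comp_apply, Equiv.swap_apply_self]
    rw [Finset.prod_sigma', Finset.prod_sigma']
    have key := prod_off (univ.sigma fun m => Finset.Icc 1 (ν m))
      (fun x : (_ : Fin n) × ℕ => 1 - q ^ (ν x.1 - x.2 + 1) * t ^ leg n ν x.1 x.2)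
      (fun x => 1 - q ^ (ν x.1 - x.2 + 1) *
        t ^ leg n (ν ∘ Equiv.swap i j) (Equiv.swap i j x.1) x.2) ⟨j, ν i + 1⟩
      (by simp; omega) (by
        rintro ⟨m, p⟩ _ hb
        simp only
        rw [leg_swap hij ν h, if_neg]
        · simp
        · rintro ⟨rfl, rfl⟩; exact hb rfl)
    have e : ν j - (ν i + 1) + 1 = ν j - ν i := by omega
    simp only [e] at key
    rw [leg_swap hij ν h j (ν i + 1), if_pos ⟨rfl, rfl⟩] at key
    exact key

lemma legCo_anti {n : ℕ} {κ : Fin n → ℕ} (h : Antitone κ) (i : Fin n) : legCo n κ i = i := by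
  unfold legCo
  have e1 : (univ.filter fun k => k < i ∧ κ i ≤ κ k) = Finset.Iio i := by
    ext k; simp; intro hk; exact h hk.le
  have e2 : (univ.filter fun k => i < k ∧ κ i < κ k) = ∅ := by
    ext k; simp; intro hk; exact h hk.le
  rw [e1, e2]; simp

lemma qt_inj {a b c d : ℕ} (h : q ^ a * t ^ b = q ^ c * t ^ d) : a = c ∧ b = d := by
  unfold q t at h
  rw [← map_pow, ← map_pow, ← map_pow, ← map_pow, ← map_mul, ← map_mul] at h
  have h := IsFractionRing.injective (MvPolynomial (Fin 2) ℚ) K h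
  have m : ∀ a b : ℕ, (X 0 ^ a * X 1 ^ b : MvPolynomial (Fin 2) ℚ) =
      monomial (Finsupp.single 0 a + Finsupp.single 1 b) 1 := by
    intro a b
    rw [X_pow_eq_monomial, X_pow_eq_monomial, monomial_mul, one_mul]
  rw [m, m] at h
  have := (MvPolynomial.monomial_left_inj (one_ne_zero)).mp h
  have h0 := DFunLike.congr_fun this 0
  have h1 := DFunLike.congr_fun this 1
  simp at h0 h1
  exact ⟨h0, h1⟩

lemma q_ne : q ≠ 0 := by
  intro h
  have : q ^ 1 * t ^ 0 = q ^ 2 * t ^ 0 := by rw [h]; simp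
  have := (qt_inj this).1
  omega

lemma one_sub_ne {a b : ℕ} (h : a ≠ 0) : 1 - q ^ a * t ^ b ≠ 0 := by
  intro h0
  have : q ^ a * t ^ b = q ^ 0 * t ^ 0 := by rw [← sub_eq_zero.mp h0]; simp
  exact h (qt_inj this).1

lemma dP_ne {n : ℕ} (ν : Fin n → ℕ) : dP' n ν ≠ 0 := by
  unfold dP'
  refine Finset.prod_ne_zero_iff.mpr fun i _ => Finset.prod_ne_zero_iff.mpr fun j _ => ?_
  exact one_sub_ne (by omega)

lemma inv_of_swaps {n : ℕ} {β : Type*} (F : (Fin n → ℕ) → β)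
    (h : ∀ (i j : Fin n), (j : ℕ) = i + 1 → ∀ ν, F (ν ∘ Equiv.swap i j) = F ν)
    (σ : Equiv.Perm (Fin n)) : ∀ ν, F (ν ∘ σ) = F ν := by
  rcases n with _ | n
  · intro ν
    congr 1
    exact Subsingleton.elim _ _
  have hm : σ ∈ Submonoid.closure
      (Set.range fun i : Fin n => Equiv.swap i.castSucc i.succ) := by
    rw [Equiv.Perm.mclosure_swap_castSucc_succ]; trivial
  induction hm using Submonoid.closure_induction with
  | mem x hx =>
    obtain ⟨i, rfl⟩ := hx
    exact h _ _ (by simp)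
  | one => intro ν; rfl
  | mul x y _ _ hx hy =>
    intro ν
    have : ν ∘ ⇑(x * y) = (ν ∘ x) ∘ y := rfl
    rw [this, hy, hx]

end S7Aux

open Finset MvPolynomial
open Stmt7
namespace S7Aux

lemma DL_ij {n : ℕ} {T : ℕ → P n →ₗ[K] P n} (hT : IsDL n t T) {i j : Fin n}
    (hij : (j : ℕ) = i + 1) : DL i j (T i) := by
  have hk : (i : ℕ) + 1 < n := by have := j.2; omega
  have h := DL_of_isDL hT hk
  have e : (⟨(i : ℕ) + 1, hk⟩ : Fin n) = j := Fin.ext hij.symm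
  rw [e] at h
  exact h

lemma Y_rel {n : ℕ} {T : ℕ → P n →ₗ[K] P n} (hT : IsDL n t T) {i j : Fin n}
    (hij : (j : ℕ) = i + 1) (f : P n) :
    Yop n q t T i (T i f) = T i (Yop n q t T j f) + (t - 1) • Yop n q t T i f ∧
    Yop n q t T j (T i f) = T i (Yop n q t T i f) - (t - 1) • Yop n q t T i f ∧
    ∀ m, m ≠ i → m ≠ j → Yop n q t T m (T i f) = T i (Yop n q t T m f) := by
  have H := hecke_of_isDL hT
  have hj := j.2
  have h := H.YT (i := i) (by omega)
  rw [← hij, ← Yop_eq, ← Yop_eq] at h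
  refine ⟨LinearMap.congr_fun h.1 f, LinearMap.congr_fun h.2 f, ?_⟩
  intro m h1 h2
  have hm := m.2
  have := H.YY_comm (i := i) (j := m) (by omega) (by omega) (fun h => h1 (Fin.ext h))
    (fun h => h2 (Fin.ext (by omega)))
  rw [← Yop_eq] at this
  exact (LinearMap.congr_fun this.eq f).symm

lemma eq_case {n : ℕ} {T : ℕ → P n →ₗ[K] P n} (hT : IsDL n t T) {i j : Fin n}
    (hij : (j : ℕ) = i + 1) {κ ν : Fin n → ℕ} (hν : sortDesc n ν = κ) {E : P n}
    (hE : IsNSMac n q t T ν E) (h : ν i = ν j) : T i E = t • E := by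
  have hne : i ≠ j := by rintro rfl; omega
  have ht := t_ne
  have hs : ν ∘ Equiv.swap i j = ν := by
    funext k
    rcases cases_ij i j k with rfl | rfl | ⟨h1, h2⟩
    · simp [h]
    · simp [h]
    · simp [Equiv.swap_apply_of_ne_of_ne h1 h2]
  have hi := hE.2.2 i
  have hj := hE.2.2 j
  have hl := legCo_eq_case hij ν h
  obtain ⟨r1, r2, r3⟩ := Y_rel hT hij E
  rw [← sub_eq_zero]
  have hab : q ^ ν i / t ^ legCo n ν i = t * (q ^ ν j / t ^ legCo n ν j) := by
    rw [hl, h, pow_succ]; field_simp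
  rw [hab] at hi
  apply joint_unique hT ν (fun m => legCo n ν (Equiv.swap i j m))
  · intro m
    rcases cases_ij i j m with rfl | rfl | ⟨h1, h2⟩
    · rw [Equiv.swap_apply_left, h]
      rw [map_sub, map_smul, r1, hi, hj, map_smul]
      simp only [smul_eq_C_mul, C_mul, C_sub, C_add, C_neg, C_1]
      ring
    · rw [Equiv.swap_apply_right, ← h, hab]
      rw [map_sub, map_smul, r2, hi, hj, map_smul]
      simp only [smul_eq_C_mul, C_mul, C_sub, C_add, C_neg, C_1]
      ring
    · rw [Equiv.swap_apply_of_ne_of_ne h1 h2, map_sub, map_smul, r3 m h1 h2, hE.2.2 m, map_smul]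
      simp only [smul_eq_C_mul, C_mul, C_sub, C_add, C_neg, C_1]
      ring
  · have := (DL_ij hT hij).coeff_top hne E ν h.ge (fun c η hc => mac_vanish hν hE ν hν c η hc)
    rw [hs] at this
    rw [coeff_sub, coeff_smul]
    change coeff (ee ν) (T i E) - t • coeff (ee ν) E = 0
    rw [this, smul_eq_mul, sub_self]

lemma lt_case {n : ℕ} {T : ℕ → P n →ₗ[K] P n} (hT : IsDL n t T) {i j : Fin n}
    (hij : (j : ℕ) = i + 1) {κ ν : Fin n → ℕ} (hν : sortDesc n ν = κ) {E E' : P n}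
    (hE : IsNSMac n q t T ν E) (h : ν i < ν j)
    (hE' : IsNSMac n q t T (ν ∘ Equiv.swap i j) E') (l : ℕ)
    (hl : legCo n ν i = legCo n ν j + (l + 1)) (g : K)
    (hg : g * (1 - q ^ (ν j - ν i) * t ^ (l + 1)) = 1 - t) :
    T i E = -g • E + t • E' := by
  have hne : i ≠ j := by rintro rfl; omega
  have hlt : i < j := by rw [Fin.lt_def]; omega
  have ht := t_ne
  have hi := hE.2.2 i
  have hj := hE.2.2 j
  have hi' := hE'.2.2 i
  have hj' := hE'.2.2 j
  have li : legCo n (ν ∘ Equiv.swap i j) i = legCo n ν j := by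
    have := legCo_swap hij ν h.ne j
    rwa [Equiv.swap_apply_right] at this
  have lj : legCo n (ν ∘ Equiv.swap i j) j = legCo n ν i := by
    have := legCo_swap hij ν h.ne i
    rwa [Equiv.swap_apply_left] at this
  obtain ⟨r1, r2, r3⟩ := Y_rel hT hij E
  have hb : q ^ ν j / t ^ legCo n ν j =
      q ^ ν i / t ^ legCo n ν i * (q ^ (ν j - ν i) * t ^ (l + 1)) := by
    have e : ν j = ν i + (ν j - ν i) := by omega
    rw [hl]
    conv_lhs => rw [e, pow_add]
    rw [pow_add t (legCo n ν j)]
    field_simp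
  rw [li] at hi'
  rw [lj] at hj'
  simp only [Function.comp_apply, Equiv.swap_apply_left, Equiv.swap_apply_right] at hi' hj'
  have hgab : (t - 1) * (q ^ ν i / t ^ legCo n ν i) =
      g * (q ^ ν j / t ^ legCo n ν j) - g * (q ^ ν i / t ^ legCo n ν i) := by
    rw [hb]
    linear_combination (q ^ ν i / t ^ legCo n ν i) * hg
  have key : T i E + g • E - t • E' = 0 := by
    apply joint_unique hT (ν ∘ Equiv.swap i j) (legCo n (ν ∘ Equiv.swap i j))
    · intro m
      rcases cases_ij i j m with rfl | rfl | ⟨h1, h2⟩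
      · rw [li, Function.comp_apply, Equiv.swap_apply_left]
        rw [map_sub, map_add, map_smul, map_smul, r1, hi, hi', hj, map_smul, smul_smul, hgab]
        simp only [smul_eq_C_mul, C_mul, C_sub, C_add, C_neg, C_1]
        ring
      · rw [lj, Function.comp_apply, Equiv.swap_apply_right]
        rw [map_sub, map_add, map_smul, map_smul, r2, hi, hj', hj, map_smul, smul_smul, hgab]
        simp only [smul_eq_C_mul, C_mul, C_sub, C_add, C_neg, C_1]
        ring
      · have e := hE'.2.2 m
        have lm : legCo n (ν ∘ Equiv.swap i j) m = legCo n ν m := by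
          have := legCo_swap hij ν h.ne m
          rwa [Equiv.swap_apply_of_ne_of_ne h1 h2] at this
        rw [lm, Function.comp_apply, Equiv.swap_apply_of_ne_of_ne h1 h2] at e ⊢
        rw [map_sub, map_add, map_smul, map_smul, r3 m h1 h2, hE.2.2 m, map_smul, e]
        simp only [smul_eq_C_mul, C_mul, C_sub, C_add, C_neg, C_1]
        ring
    · have hμ : sortDesc n (ν ∘ Equiv.swap i j) = κ := by rw [sortDesc_comp, hν]
      have := (DL_ij hT hij).coeff_top hne E (ν ∘ Equiv.swap i j) (by simp [h.le])
        (fun c η hc => mac_vanish hν hE _ hμ c η hc)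
      have e : (ν ∘ Equiv.swap i j) ∘ Equiv.swap i j = ν := by funext k; simp
      have z := mac_zero hE hlt h
      rw [e] at this
      have u1 := hE.1
      have u2 := hE'.1
      rw [coeff_sub, coeff_add, coeff_smul, coeff_smul, u2]
      change coeff (ee (ν ∘ Equiv.swap i j)) (T i E) + g • coeff (ee (ν ∘ Equiv.swap i j)) E - _ = 0
      rw [this, z]
      change t * coeff (Finsupp.equivFunOnFinite.symm ν) E + _ - _ = 0
      rw [u1]
      simp
  simp only [smul_eq_C_mul, C_mul, C_sub, C_add, C_neg, C_1] at key ⊢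
  linear_combination key

lemma pair_case {n : ℕ} {T : ℕ → P n →ₗ[K] P n} (hT : IsDL n t T) {i j : Fin n}
    (hij : (j : ℕ) = i + 1) {κ ν : Fin n → ℕ} (hν : sortDesc n ν = κ) {E E' : P n}
    (hE : IsNSMac n q t T ν E) (h : ν i < ν j)
    (hE' : IsNSMac n q t T (ν ∘ Equiv.swap i j) E') (d : K) :
    (d / dP' n ν) • (T i E - t • E) +
      (d / dP' n (ν ∘ Equiv.swap i j)) • (T i E' - t • E') = 0 := by
  obtain ⟨l, hl, hd⟩ := dP_swap hij ν h
  have ht := t_ne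
  have hne : i ≠ j := by rintro rfl; omega
  have hD : 1 - q ^ (ν j - ν i) * t ^ (l + 1) ≠ 0 := one_sub_ne (by omega)
  obtain ⟨g, hg⟩ : ∃ g, g * (1 - q ^ (ν j - ν i) * t ^ (l + 1)) = 1 - t :=
    ⟨(1 - t) / (1 - q ^ (ν j - ν i) * t ^ (l + 1)), div_mul_cancel₀ _ hD⟩
  have h1 := lt_case hT hij hν hE h hE' l hl g hg
  have h2 : T i (T i E) = (t - 1) • T i E + t • E := by
    have := (DL_ij hT hij).quad hne E
    rw [this, smul_eq_C_mul, smul_eq_C_mul, map_sub, map_one]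
  rw [h1, map_add, map_smul, map_smul, h1] at h2
  have d1 := dP_ne ν
  have d2 := dP_ne (ν ∘ Equiv.swap i j)
  set D := dP' n ν
  set D' := dP' n (ν ∘ Equiv.swap i j)
  have hc : t * (d / D) = (d / D') * (1 - g) := by
    have : t * D' = D * (1 - g) := by
      apply mul_right_cancel₀ hD
      linear_combination D * hg - t * hd
    field_simp
    linear_combination d * this
  have ht2 : t • ((d / D) • (T i E - t • E) + (d / D') • (T i E' - t • E')) = 0 := by
    rw [h1]
    have hc2 := congrArg (C : K → P n) hc
    simp only [smul_eq_C_mul, C_mul, C_sub, C_add, C_neg, C_1] at h2 hc2 ⊢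
    linear_combination C (d / D') * h2 + hc2 * (C t * E' - (C g + C t) * E)
  exact (smul_eq_zero.mp ht2).resolve_left ht

lemma sym_of_T {n : ℕ} {T : P n →ₗ[K] P n} {i j : Fin n} (hij : i ≠ j) (h : DL i j T) {S : P n}
    (hS : T S = t • S) : rename (Equiv.swap i j) S = S := by
  have h1 := h S
  rw [hS, smul_eq_C_mul] at h1
  have hne : (C t * X i - X j : P n) ≠ 0 := by
    intro h0
    have := congrArg (coeff (Finsupp.single j 1)) h0
    rw [coeff_sub, coeff_C_mul, coeff_X, coeff_X', if_neg] at this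
    · simp at this
    · intro h'
      exact hij ((Finsupp.single_left_inj one_ne_zero).mp h')
  apply mul_left_cancel₀ hne
  linear_combination -h1

end S7Aux

open Finset MvPolynomial
open Stmt7
namespace S7Aux

lemma perm_of_poly {n : ℕ} (η κ : Fin n → ℕ)
    (h : (∑ i, Polynomial.X ^ η i : Polynomial ℚ) = ∑ i, Polynomial.X ^ κ i) :
    ∃ σ : Equiv.Perm (Fin n), η = κ ∘ σ := by
  have hc : ∀ d, Fintype.card {i // η i = d} = Fintype.card {i // κ i = d} := by
    intro d
    have h1 := congrArg (fun p => Polynomial.coeff p d) h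
    simp only [Polynomial.finsetSum_coeff, Polynomial.coeff_X_pow, Finset.sum_boole] at h1
    rw [Fintype.card_subtype, Fintype.card_subtype]
    simp only [eq_comm (a := d)] at h1
    exact_mod_cast h1
  let e : ∀ d, {i // η i = d} ≃ {i // κ i = d} := fun d => Fintype.equivOfCardEq (hc d)
  refine ⟨((Equiv.sigmaFiberEquiv η).symm.trans (Equiv.sigmaCongrRight e)).trans
    (Equiv.sigmaFiberEquiv κ), ?_⟩
  funext i
  exact ((e (η i) ⟨i, rfl⟩).2).symm

lemma orbit_finite {n : ℕ} (κ : Fin n → ℕ) : {ν : Fin n → ℕ | sortDesc n ν = κ}.Finite := by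
  refine (Set.finite_range (fun σ : Equiv.Perm (Fin n) => κ ∘ σ)).subset ?_
  intro ν hν
  obtain ⟨σ, h⟩ := sortDesc_perm ν
  refine ⟨σ⁻¹, ?_⟩
  have hν : sortDesc n ν = κ := hν
  rw [← hν, h]
  funext k
  simp

lemma lam_inv {n : ℕ} {κ : Fin n → ℕ} (hκ : Antitone κ) {ν : Fin n → ℕ} (h : sortDesc n ν = κ) :
    (∑ i, q ^ ν i / t ^ legCo n ν i) = ∑ i : Fin n, q ^ κ i * (t ^ (i : ℕ))⁻¹ := by
  have key := inv_of_swaps (n := n) (fun ν => ∑ i, q ^ ν i / t ^ legCo n ν i) (by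
    intro i j hij ν
    by_cases he : ν i = ν j
    · have : ν ∘ Equiv.swap i j = ν := by
        funext k
        rcases cases_ij i j k with rfl | rfl | ⟨h1, h2⟩
        · simp [he]
        · simp [he]
        · simp [Equiv.swap_apply_of_ne_of_ne h1 h2]
      rw [this]
    · rw [← Equiv.sum_comp (Equiv.swap i j)]
      apply Finset.sum_congr rfl
      intro k _
      rw [legCo_swap hij ν he]
      simp)
  obtain ⟨σ, hσ⟩ := sortDesc_perm ν
  have := key σ ν
  rw [← hσ, h] at this
  rw [← this]
  apply Finset.sum_congr rfl
  intro i _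
  rw [legCo_anti hκ, div_eq_mul_inv]

end S7Aux

open S7Aux

theorem stmt_7 (n : ℕ) (κ : Fin n → ℕ) (hκ : Antitone κ)
    (T : ℕ → P n →ₗ[K] P n) (hT : IsDL n t T)
    (E : (Fin n → ℕ) → P n) (hE : ∀ ν : Fin n → ℕ, sortDesc n ν = κ → IsNSMac n q t T ν (E ν))
    (Pp : P n) (hPp : IsSymMac n q t T κ Pp) :
    Pp = ∑ᶠ ν ∈ {ν : Fin n → ℕ | sortDesc n ν = κ}, (dP' n κ / dP' n ν) • E ν := by
  classical
  rw [finsum_mem_eq_finite_toFinset_sum _ (orbit_finite κ)]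
  set O := (orbit_finite κ).toFinset with hO
  have memO : ∀ ν, ν ∈ O ↔ sortDesc n ν = κ := by intro ν; simp [hO]
  set S := ∑ ν ∈ O, (dP' n κ / dP' n ν) • E ν with hS
  have hκκ : sortDesc n κ = κ := sortDesc_self hκ
  have hTS : ∀ i j : Fin n, (j : ℕ) = i + 1 → T i S = t • S := by
    intro i j hij
    rw [← sub_eq_zero, hS, map_sum, Finset.smul_sum, ← Finset.sum_sub_distrib]
    have hss : ∀ ν : Fin n → ℕ, (ν ∘ Equiv.swap i j) ∘ Equiv.swap i j = ν := by
      intro ν; funext k; simp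
    have e : ∀ ν, T i ((dP' n κ / dP' n ν) • E ν) - t • (dP' n κ / dP' n ν) • E ν =
        (dP' n κ / dP' n ν) • (T i (E ν) - t • E ν) := by
      intro ν
      rw [map_smul, smul_sub, smul_comm]
    simp only [e]
    refine Finset.sum_involution (fun ν _ => ν ∘ Equiv.swap i j) ?_ ?_ ?_ ?_
    · intro ν hν
      have hν := (memO ν).mp hν
      have hμ : sortDesc n (ν ∘ Equiv.swap i j) = κ := by rw [sortDesc_comp, hν]
      rcases lt_trichotomy (ν i) (ν j) with h | h | h
      · exact pair_case hT hij hν (hE ν hν) h (hE _ hμ) _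
      · rw [eq_case hT hij hν (hE ν hν) h, eq_case hT hij hμ (hE _ hμ) (by simp [h])]
        simp
      · have := pair_case hT hij hμ (hE _ hμ) (by simp [h]) (by rw [hss]; exact hE ν hν) (dP' n κ)
        rw [hss] at this
        rw [add_comm]
        exact this
    · intro ν hν hne he
      apply hne
      have hν := (memO ν).mp hν
      have h : ν i = ν j := by
        have := congrFun he j
        simpa using this
      rw [eq_case hT hij hν (hE ν hν) h]
      simp
    · intro ν hν
      rw [memO] at hν ⊢
      rw [sortDesc_comp, hν]
    · intro ν hν
      exact hss ν
  have hsw : ∀ i j : Fin n, (j : ℕ) = i + 1 → rename (Equiv.swap i j) S = S := by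
    intro i j hij
    have hne : i ≠ j := by rintro rfl; omega
    exact sym_of_T hne (DL_ij hT hij) (hTS i j hij)
  have hcoef : ∀ (σ : Equiv.Perm (Fin n)) (ν : Fin n → ℕ),
      coeff (ee (ν ∘ σ)) S = coeff (ee ν) S := by
    intro σ
    refine inv_of_swaps (fun ν => coeff (ee ν) S) ?_ σ
    intro i j hij ν
    have := coeff_rename_perm (Equiv.swap i j) S ν
    rw [hsw i j hij] at this
    exact this.symm
  have hSκ : coeff (ee κ) S = 1 := by
    rw [hS, coeff_sum, Finset.sum_eq_single κ]
    · rw [coeff_smul]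
      have := (hE κ hκκ).1
      change _ • coeff (Finsupp.equivFunOnFinite.symm κ) (E κ) = 1
      rw [this, div_self (dP_ne κ)]
      simp
    · intro ν hν hne
      have hν := (memO ν).mp hν
      rw [coeff_smul]
      have : coeff (ee κ) (E ν) = 0 := by
        by_contra h0
        rcases (hE ν hν).2.1 _ h0 with h1 | h1 | h1
        · exact hne h1.symm
        · apply h1.2
          rw [hν]
          exact hκκ
        · exact hne (eq_of_domLE hκ hν h1.2.1).symm
      rw [this, smul_zero]
    · intro h
      exact absurd ((memO κ).mpr hκκ) h
  have hYS : (∑ i : Fin n, Yop n q t T i) S = (∑ i : Fin n, q ^ κ i * (t ^ (i : ℕ))⁻¹) • S := by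
    rw [hS, map_sum, Finset.smul_sum]
    apply Finset.sum_congr rfl
    intro ν hν
    have hν := (memO ν).mp hν
    rw [map_smul, LinearMap.sum_apply, smul_comm]
    congr 1
    rw [Finset.sum_congr rfl (fun i _ => (hE ν hν).2.2 i), ← Finset.sum_smul, lam_inv hκ hν]
  rw [← sub_eq_zero]
  apply sum_unique hT κ
  · rw [map_sub, hPp.2.2.2, hYS, smul_sub]
  · intro η hη
    obtain ⟨σ, hσ⟩ := perm_of_poly _ _ hη
    have h1 : coeff (ee (κ ∘ σ)) Pp = 1 := by
      rw [← coeff_rename_perm, hPp.1 σ]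
      exact hPp.2.1
    rw [← ee_coe η, hσ, coeff_sub, hcoef, hSκ, h1, sub_self]
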